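/- The number of equivalence classes of generic degree n complex meromorphic functions on the Riemann sphere with a fixed generic set of 2n-2 critical values (the genus 0 Hurwitz number) equals n^{n-3}·(2n-2)!/n!. -/

import Mathlib

namespace Hur
open Finset

section algebra
variable {ι : Type*} [DecidableEq ι]

lemma sum_powerset_mem (C : Finset ι) (G : ι → Finset ι → ℚ) :
    ∑ S ∈ C.powerset, ∑ j ∈ S, G j S = ∑ j ∈ C, ∑ S ∈ (C.erase j).powerset, G j (insert j S) := by
  rw [Finset.sum_comm' (t' := C) (s' := fun j => C.powerset.filter (fun S => j ∈ S))]
  · refine Finset.sum_congr rfl fun j hj => ?_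
    symm
    refine Finset.sum_nbij' (fun S => insert j S) (fun S => S.erase j) ?_ ?_ ?_ ?_ ?_
    · intro S hS
      simp only [mem_powerset, mem_filter, mem_insert, true_or, and_true] at hS ⊢
      exact Finset.insert_subset hj (hS.trans (erase_subset _ _))
    · intro S hS
      simp only [mem_powerset, mem_filter] at hS ⊢
      exact Finset.erase_subset_erase _ hS.1
    · intro S hS
      simp only [mem_powerset] at hS
      exact Finset.erase_insert (fun h => by simpa using hS h)
    · intro S hS
      simp only [mem_powerset, mem_filter] at hS
      exact Finset.insert_erase hS.2
    · intros; rfl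
  · intro S j
    simp only [mem_powerset, mem_filter]
    constructor
    · rintro ⟨h1, h2⟩; exact ⟨⟨h1, h2⟩, h1 h2⟩
    · rintro ⟨⟨h1, h2⟩, h3⟩; exact ⟨h1, h2⟩

lemma fin_diff (a : ι → ℚ) (U : Finset ι) : ∀ (d : ℕ) (x : ℚ), d < U.card →
    ∑ S ∈ U.powerset, (-1 : ℚ) ^ S.card * (x + ∑ i ∈ S, a i) ^ d = 0 := by
  induction U using Finset.induction_on with
  | empty => intro d x h; simp at h
  | insert j U hj ih =>
    intro d x hd
    rw [card_insert_of_notMem hj] at hd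
    rw [Finset.sum_powerset_insert hj, ← Finset.sum_add_distrib]
    have h1 : ∀ S ∈ U.powerset, ((-1 : ℚ) ^ S.card * (x + ∑ i ∈ S, a i) ^ d +
        (-1 : ℚ) ^ (insert j S).card * (x + ∑ i ∈ insert j S, a i) ^ d) =
        - ∑ e ∈ range d, (d.choose e : ℚ) * a j ^ (d - e) *
          ((-1 : ℚ) ^ S.card * (x + ∑ i ∈ S, a i) ^ e) := by
      intro S hS
      have hjS : j ∉ S := fun h => hj (mem_powerset.1 hS h)
      rw [card_insert_of_notMem hjS, sum_insert hjS]
      have : x + (a j + ∑ i ∈ S, a i) = (x + ∑ i ∈ S, a i) + a j := by ring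
      rw [this, add_pow (x + ∑ i ∈ S, a i) (a j), Finset.sum_range_succ, mul_add, pow_succ]
      have h2 : ∑ e ∈ range d, (d.choose e : ℚ) * a j ^ (d - e) *
          ((-1 : ℚ) ^ S.card * (x + ∑ i ∈ S, a i) ^ e) = (-1 : ℚ) ^ S.card *
          ∑ e ∈ range d, (x + ∑ i ∈ S, a i) ^ e * a j ^ (d - e) * (d.choose e : ℚ) := by
        rw [mul_sum]; exact sum_congr rfl fun _ _ => by ring
      rw [h2]; simp only [Nat.sub_self, pow_zero, Nat.choose_self, Nat.cast_one]; ring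
    rw [sum_congr rfl h1, sum_neg_distrib, sum_comm, neg_eq_zero]
    refine sum_eq_zero fun e he => ?_
    rw [← mul_sum, ih e x (by have := mem_range.1 he; omega), mul_zero]

lemma abelB (a : ι → ℚ) (ha : ∀ i, 0 < a i) (C : Finset ι) (x y : ℚ) (hx : 0 < x) :
    ∑ S ∈ C.powerset, (x * (x + ∑ i ∈ S, a i) ^ ((S.card : ℤ) - 1)) *
      (y + ∑ i ∈ C \ S, a i) ^ (C \ S).card = (x + y + ∑ i ∈ C, a i) ^ C.card := by
  have hpos : ∀ S : Finset ι, 0 < x + ∑ i ∈ S, a i := fun S =>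
    add_pos_of_pos_of_nonneg hx (sum_nonneg fun i _ => (ha i).le)
  set z := x + y + ∑ i ∈ C, a i with hz
  have h1 : ∀ S ∈ C.powerset, (x * (x + ∑ i ∈ S, a i) ^ ((S.card : ℤ) - 1)) *
      (y + ∑ i ∈ C \ S, a i) ^ (C \ S).card = ∑ R ∈ (C \ S).powerset,
      z ^ (C.card - (S ∪ R).card) * (x * ((-1) ^ R.card *
        (x + ∑ i ∈ S, a i) ^ (((S ∪ R).card : ℤ) - 1))) := by
    intro S hS
    rw [mem_powerset] at hS
    have e1 : y + ∑ i ∈ C \ S, a i = -(x + ∑ i ∈ S, a i) + z := by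
      rw [hz, ← sum_sdiff hS]; ring
    rw [e1, ← Finset.sum_pow_mul_eq_add_pow, mul_sum]
    refine sum_congr rfl fun R hR => ?_
    rw [mem_powerset] at hR
    have hd : Disjoint S R := (disjoint_sdiff).mono_right hR
    rw [card_union_of_disjoint hd, card_sdiff_of_subset hS, ← Nat.sub_sub]
    have : ((S.card + R.card : ℕ) : ℤ) - 1 = ((S.card : ℤ) - 1) + (R.card : ℤ) := by push_cast; ring
    rw [this, zpow_add₀ (hpos S).ne', zpow_natCast, neg_pow]
    ring
  rw [sum_congr rfl h1]
  have h2 : ∑ S ∈ C.powerset, ∑ R ∈ (C \ S).powerset,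
      z ^ (C.card - (S ∪ R).card) * (x * ((-1) ^ R.card *
        (x + ∑ i ∈ S, a i) ^ (((S ∪ R).card : ℤ) - 1))) =
      ∑ U ∈ C.powerset, ∑ S ∈ U.powerset, z ^ (C.card - U.card) * (x * ((-1) ^ (U.card - S.card) *
        (x + ∑ i ∈ S, a i) ^ ((U.card : ℤ) - 1))) := by
    rw [Finset.sum_sigma', Finset.sum_sigma']
    refine Finset.sum_bij' (fun p _ => ⟨p.1 ∪ p.2, p.1⟩) (fun p _ => ⟨p.2, p.1 \ p.2⟩) ?_ ?_ ?_ ?_ ?_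
    · rintro ⟨S, R⟩ h
      simp only [mem_sigma, mem_powerset] at h ⊢
      exact ⟨union_subset h.1 (h.2.trans sdiff_subset), subset_union_left⟩
    · rintro ⟨U, S⟩ h
      simp only [mem_sigma, mem_powerset] at h ⊢
      exact ⟨h.2.trans h.1, sdiff_subset_sdiff h.1 le_rfl⟩
    · rintro ⟨S, R⟩ h
      simp only [mem_sigma, mem_powerset] at h
      have hd : Disjoint S R := (disjoint_sdiff).mono_right h.2
      simp only [union_sdiff_cancel_left hd]
    · rintro ⟨U, S⟩ h
      simp only [mem_sigma, mem_powerset] at h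
      simp only [union_sdiff_of_subset h.2]
    · rintro ⟨S, R⟩ h
      simp only [mem_sigma, mem_powerset] at h
      have hd : Disjoint S R := (disjoint_sdiff).mono_right h.2
      simp only [card_union_of_disjoint hd]
      simp
  rw [h2, sum_eq_single ∅]
  · simp [hx.ne']
  · intro U hU hne
    rw [← mul_sum, ← mul_sum]
    have hc : 0 < U.card := card_pos.2 (nonempty_iff_ne_empty.2 hne)
    have : ∑ S ∈ U.powerset, (-1 : ℚ) ^ (U.card - S.card) * (x + ∑ i ∈ S, a i) ^ ((U.card : ℤ) - 1)
        = (-1) ^ U.card * ∑ S ∈ U.powerset, (-1 : ℚ) ^ S.card * (x + ∑ i ∈ S, a i) ^ (U.card - 1) := by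
      rw [mul_sum]
      refine sum_congr rfl fun S hS => ?_
      have hle := card_le_card (mem_powerset.1 hS)
      have e : (U.card : ℤ) - 1 = ((U.card - 1 : ℕ) : ℤ) := by omega
      rw [e, zpow_natCast, ← mul_assoc]
      congr 1
      rw [← pow_add]
      exact neg_one_pow_congr (by
        rw [Nat.even_sub hle, Nat.even_add])
    rw [this, fin_diff a U _ x (by omega)]
    simp
  · simp

/-- the Abel-Hurwitz polynomials of binomial type -/
def Hh (a : ι → ℚ) (x : ℚ) (S : Finset ι) : ℚ := x * (x + ∑ i ∈ S, a i) ^ ((S.card : ℤ) - 1)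

lemma abelA (a : ι → ℚ) (ha : ∀ i, 0 < a i) (C : Finset ι) (x y : ℚ) (hx : 0 < x) (hy : 0 < y) :
    ∑ S ∈ C.powerset, Hh a x S * Hh a y (C \ S) = Hh a (x + y) C := by
  have hB : ∀ (C : Finset ι) (y : ℚ), ∑ T ∈ C.powerset, Hh a x (C \ T) *
      (y + ∑ i ∈ T, a i) ^ T.card = (x + y + ∑ i ∈ C, a i) ^ C.card := by
    intro C y
    rw [← abelB a ha C x y hx]
    refine Finset.sum_nbij' (fun S => C \ S) (fun S => C \ S) ?_ ?_ ?_ ?_ ?_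
    · intro S _; simp
    · intro S _; simp
    · intro S hS; simpa using mem_powerset.1 hS
    · intro S hS; simpa using mem_powerset.1 hS
    · intro S hS
      simp only [Hh]
      rw [Finset.sdiff_sdiff_eq_self (mem_powerset.1 hS)]
  have hsw : ∑ S ∈ C.powerset, Hh a x S * Hh a y (C \ S) =
      ∑ T ∈ C.powerset, Hh a x (C \ T) * Hh a y T := by
    refine Finset.sum_nbij' (fun S => C \ S) (fun S => C \ S) ?_ ?_ ?_ ?_ ?_
    · intro S _; simp
    · intro S _; simp
    · intro S hS; simpa using mem_powerset.1 hS
    · intro S hS; simpa using mem_powerset.1 hS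
    · intro S hS
      rw [Finset.sdiff_sdiff_eq_self (mem_powerset.1 hS)]
  have hpos : ∀ S : Finset ι, 0 < y + ∑ i ∈ S, a i := fun S =>
    add_pos_of_pos_of_nonneg hy (sum_nonneg fun i _ => (ha i).le)
  have key : ∀ T ∈ C.powerset, Hh a x (C \ T) * Hh a y T =
      Hh a x (C \ T) * (y + ∑ i ∈ T, a i) ^ T.card -
      ∑ j ∈ T, a j * (Hh a x (C \ T) * (y + ∑ i ∈ T, a i) ^ ((T.card : ℤ) - 1)) := by
    intro T _
    rw [← sum_mul]
    simp only [Hh]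
    have : (y + ∑ i ∈ T, a i) ^ T.card =
        (y + ∑ i ∈ T, a i) * (y + ∑ i ∈ T, a i) ^ ((T.card : ℤ) - 1) := by
      rw [← zpow_one_add₀ (hpos T).ne']; simp
    rw [this]; ring
  rw [hsw, sum_congr rfl key, sum_sub_distrib, hB, sum_powerset_mem]
  have h3 : ∀ j ∈ C, ∑ S ∈ (C.erase j).powerset, a j * (Hh a x (C \ insert j S) *
      (y + ∑ i ∈ insert j S, a i) ^ (((insert j S).card : ℤ) - 1)) =
      a j * (x + y + ∑ i ∈ C, a i) ^ ((C.card : ℤ) - 1) := by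
    intro j hj
    rw [← mul_sum]
    congr 1
    have := hB (C.erase j) (y + a j)
    rw [card_erase_of_mem hj] at this
    have e1 : x + (y + a j) + ∑ i ∈ C.erase j, a i = x + y + ∑ i ∈ C, a i := by
      rw [← add_sum_erase C a hj]; ring
    have hc : 0 < C.card := card_pos.2 ⟨j, hj⟩
    have e2 : (C.card : ℤ) - 1 = ((C.card - 1 : ℕ) : ℤ) := by omega
    rw [e2, zpow_natCast, ← e1, ← this]
    refine sum_congr rfl fun S hS => ?_
    have hjS : j ∉ S := fun h => by simpa using mem_powerset.1 hS h
    rw [card_insert_of_notMem hjS, sum_insert hjS, sdiff_insert, ← erase_sdiff_comm]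
    simp [add_assoc]
  rw [sum_congr rfl h3, ← sum_mul]
  simp only [Hh]
  have hz : 0 < x + y + ∑ i ∈ C, a i :=
    add_pos_of_pos_of_nonneg (add_pos hx hy) (sum_nonneg fun i _ => (ha i).le)
  have : (x + y + ∑ i ∈ C, a i) ^ C.card =
        (x + y + ∑ i ∈ C, a i) * (x + y + ∑ i ∈ C, a i) ^ ((C.card : ℤ) - 1) := by
    rw [← zpow_one_add₀ hz.ne']; simp
  rw [this]; ring

lemma abelQ (a : ι → ℚ) (ha : ∀ i, 0 < a i) (C : Finset ι) (x y : ℚ) (hx : 0 < x) (hy : 0 < y) :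
    x ^ 2 * y * ∑ S ∈ C.powerset, (x + ∑ i ∈ S, a i) ^ ((S.card : ℤ) - 2) *
      (y + ∑ i ∈ C \ S, a i) ^ (((C \ S).card : ℤ) - 1) =
    (x + y) * (x + y + ∑ i ∈ C, a i) ^ ((C.card : ℤ) - 1) - ∑ j ∈ C, x * a j / (x + a j) *
      ((x + y + a j) * (x + y + ∑ i ∈ C, a i) ^ ((C.card : ℤ) - 2)) := by
  have hpos : ∀ S : Finset ι, 0 < x + ∑ i ∈ S, a i := fun S =>
    add_pos_of_pos_of_nonneg hx (sum_nonneg fun i _ => (ha i).le)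
  have key : ∀ S ∈ C.powerset, x ^ 2 * y * ((x + ∑ i ∈ S, a i) ^ ((S.card : ℤ) - 2) *
      (y + ∑ i ∈ C \ S, a i) ^ (((C \ S).card : ℤ) - 1)) = Hh a x S * Hh a y (C \ S) -
      ∑ j ∈ S, x * a j / (x + a j) * (Hh a (x + a j) (S.erase j) * Hh a y (C \ S)) := by
    intro S _
    have h1 : ∀ j ∈ S, x * a j / (x + a j) * (Hh a (x + a j) (S.erase j) * Hh a y (C \ S)) =
        a j * (x * ((x + ∑ i ∈ S, a i) ^ ((S.card : ℤ) - 2) * Hh a y (C \ S))) := by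
      intro j hj
      simp only [Hh]
      have hc : 0 < S.card := card_pos.2 ⟨j, hj⟩
      have e0 : (((S.erase j).card : ℕ) : ℤ) - 1 = (S.card : ℤ) - 2 := by
        rw [card_erase_of_mem hj]; omega
      have e1 : x + a j + ∑ i ∈ S.erase j, a i = x + ∑ i ∈ S, a i := by
        rw [← add_sum_erase S a hj]; ring
      rw [e0, e1]
      have := (add_pos hx (ha j)).ne'
      field_simp
    rw [sum_congr rfl h1, ← sum_mul]
    simp only [Hh]
    have : (x + ∑ i ∈ S, a i) ^ ((S.card : ℤ) - 1) =
        (x + ∑ i ∈ S, a i) * (x + ∑ i ∈ S, a i) ^ ((S.card : ℤ) - 2) := by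
      rw [← zpow_one_add₀ (hpos S).ne']; congr 1; ring
    rw [this]; ring
  rw [mul_sum, sum_congr rfl key, sum_sub_distrib, abelA a ha C x y hx hy, sum_powerset_mem]
  congr 1
  refine sum_congr rfl fun j hj => ?_
  rw [← mul_sum]
  congr 1
  have := abelA a ha (C.erase j) (x + a j) y (add_pos hx (ha j)) hy
  have hc : 0 < C.card := card_pos.2 ⟨j, hj⟩
  have e0 : (((C.erase j).card : ℕ) : ℤ) - 1 = (C.card : ℤ) - 2 := by
    rw [card_erase_of_mem hj]; omega
  have e1 : x + a j + y + ∑ i ∈ C.erase j, a i = x + y + ∑ i ∈ C, a i := by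
    rw [← add_sum_erase C a hj]; ring
  have e2 : x + a j + y = x + y + a j := by ring
  have h4 : Hh a (x + a j + y) (C.erase j) =
      (x + y + a j) * (x + y + ∑ i ∈ C, a i) ^ ((C.card : ℤ) - 2) := by
    simp only [Hh]; rw [e0, e1, e2]
  rw [← h4, ← this]
  refine sum_congr rfl fun S hS => ?_
  have hjS : j ∉ S := fun h => by simpa using mem_powerset.1 hS h
  rw [erase_insert hjS, sdiff_insert, ← erase_sdiff_comm]

end algebra
end Hur

namespace Hur
open Finset

/-- `c k = k^k / k!` -/
def cc (k : ℕ) : ℚ := (k : ℚ) ^ k / (k.factorial : ℚ)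

lemma cc_pos (k : ℕ) : 0 < cc k := by
  unfold cc
  rcases Nat.eq_zero_or_pos k with rfl | h
  · simp
  · have : (0 : ℚ) < k := by exact_mod_cast h
    positivity

lemma diff_range (q j : ℕ) (h : j < q) :
    ∑ b ∈ range (q + 1), (-1 : ℚ) ^ b * (b : ℚ) ^ j / ((b.factorial : ℚ) * ((q - b).factorial : ℚ)) = 0 := by
  have := fin_diff (fun _ : ℕ => (1 : ℚ)) (range q) j 0 (by simpa using h)
  simp only [sum_const, nsmul_eq_mul, mul_one, zero_add] at this
  rw [Finset.sum_powerset_apply_card (fun b => (-1 : ℚ) ^ b * (b : ℚ) ^ j)] at this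
  simp only [card_range, nsmul_eq_mul] at this
  have h2 : (q.factorial : ℚ) * ∑ b ∈ range (q + 1), (-1 : ℚ) ^ b * (b : ℚ) ^ j /
      ((b.factorial : ℚ) * ((q - b).factorial : ℚ)) = 0 := by
    rw [mul_sum, ← this]
    refine sum_congr rfl fun b hb => ?_
    rw [Nat.cast_choose ℚ (by have := mem_range.1 hb; omega : b ≤ q)]
    ring
  have h3 : (q.factorial : ℚ) ≠ 0 := by positivity
  exact (mul_eq_zero.1 h2).resolve_left h3

lemma partial0 (q : ℕ) : ∀ l : ℚ, 0 < l →
    ∑ b ∈ range (q + 1), (-1 : ℚ) ^ b * (q.choose b : ℚ) / (l + b) =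
      (q.factorial : ℚ) / ∏ i ∈ range (q + 1), (l + i) := by
  induction q with
  | zero => intro l _; simp
  | succ q ih =>
    intro l hl
    have e : ∀ b ∈ range (q + 1), (-1 : ℚ) ^ (b + 1) * ((q + 1).choose (b + 1) : ℚ) / (l + ((b + 1 : ℕ) : ℚ))
        = - ((-1 : ℚ) ^ b * (q.choose b : ℚ) / (l + 1 + b)) +
          (-1 : ℚ) ^ (b + 1) * (q.choose (b + 1) : ℚ) / (l + ((b + 1 : ℕ) : ℚ)) := by
      intro b _
      rw [Nat.choose_succ_succ]
      push_cast
      have : l + ((b : ℚ) + 1) = l + 1 + b := by ring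
      rw [this]; ring
    rw [sum_range_succ', sum_congr rfl e, sum_add_distrib, sum_neg_distrib, ih (l + 1) (by linarith)]
    have e2 : ∑ b ∈ range (q + 1), (-1 : ℚ) ^ (b + 1) * (q.choose (b + 1) : ℚ) / (l + ((b + 1 : ℕ) : ℚ))
        + (-1 : ℚ) ^ 0 * ((q + 1).choose 0 : ℚ) / (l + ((0 : ℕ) : ℚ)) =
        (q.factorial : ℚ) / ∏ i ∈ range (q + 1), (l + i) := by
      rw [← ih l hl, sum_range_succ, sum_range_succ' (fun b : ℕ => (-1 : ℚ) ^ b * (q.choose b : ℚ) / (l + b)) q]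
      simp
    rw [add_assoc, e2]
    have e3 : ∏ i ∈ range (q + 1 + 1), (l + i) = (∏ i ∈ range q, (l + 1 + i)) * l * (l + q + 1) := by
      rw [prod_range_succ', prod_range_succ]
      push_cast
      have : ∏ i ∈ range q, (l + ((i : ℚ) + 1)) = ∏ i ∈ range q, (l + 1 + i) :=
        prod_congr rfl fun i _ => by ring
      rw [this]; ring
    have e4 : ∏ i ∈ range (q + 1), (l + i) = (∏ i ∈ range q, (l + 1 + i)) * l := by
      rw [prod_range_succ']
      push_cast
      have : ∏ i ∈ range q, (l + ((i : ℚ) + 1)) = ∏ i ∈ range q, (l + 1 + i) :=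
        prod_congr rfl fun i _ => by ring
      rw [this]; ring
    rw [e3, e4, prod_range_succ, Nat.factorial_succ]
    have hp : 0 < ∏ i ∈ range q, (l + 1 + i) := prod_pos fun i _ => by positivity
    have h1 : l + 1 + q ≠ 0 := by positivity
    have h2 : l + q + 1 ≠ 0 := by positivity
    push_cast
    field_simp
    ring

lemma partialj (q : ℕ) (l : ℚ) (hl : 0 < l) : ∀ j : ℕ, j ≤ q →
    ∑ b ∈ range (q + 1), (-1 : ℚ) ^ b * (-(b : ℚ)) ^ j /
      ((b.factorial : ℚ) * ((q - b).factorial : ℚ)) / (l + b) =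
      l ^ j / ∏ i ∈ range (q + 1), (l + i) := by
  intro j
  induction j with
  | zero =>
    intro _
    have := partial0 q l hl
    have h3 : (q.factorial : ℚ) ≠ 0 := by positivity
    apply mul_left_cancel₀ h3
    rw [mul_sum]
    simp only [pow_zero, mul_one]
    rw [mul_one_div, ← this]
    refine sum_congr rfl fun b hb => ?_
    rw [Nat.cast_choose ℚ (by have := mem_range.1 hb; omega : b ≤ q)]
    ring
  | succ j ih =>
    intro hj
    have h := ih (by omega)
    have hd := diff_range q j (by omega)
    rw [pow_succ, mul_comm (l ^ j) l, mul_div_assoc, ← h, mul_sum]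
    have hd' : ∑ b ∈ range (q + 1), (-1 : ℚ) ^ b * (-(b : ℚ)) ^ j /
      ((b.factorial : ℚ) * ((q - b).factorial : ℚ)) = 0 := by
      rw [← mul_zero ((-1 : ℚ) ^ j), ← hd, mul_sum]
      refine sum_congr rfl fun b _ => ?_
      rw [neg_pow (b : ℚ)]; ring
    rw [← sub_eq_zero, ← sum_sub_distrib, ← neg_eq_zero, ← hd', ← sum_neg_distrib]
    refine sum_congr rfl fun b _ => ?_
    have : l + b ≠ 0 := by positivity
    field_simp
    ring

lemma cc_mul (k b : ℕ) (hb : b ≤ k) : cc b * cc (k - b) = ∑ q ∈ Ico b (k + 1),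
    ((-1 : ℚ) ^ b * (-(b : ℚ)) ^ q / ((b.factorial : ℚ) * ((q - b).factorial : ℚ))) *
      ((k : ℚ) ^ (k - q) / ((k - q).factorial : ℚ)) := by
  have h : cc (k - b) = ∑ r ∈ range (k - b + 1), (-(b : ℚ)) ^ r * (k : ℚ) ^ (k - b - r) /
      ((r.factorial : ℚ) * ((k - b - r).factorial : ℚ)) := by
    have e : ((k - b : ℕ) : ℚ) = -(b : ℚ) + k := by rw [Nat.cast_sub hb]; ring
    unfold cc
    rw [e, add_pow, sum_div]
    refine sum_congr rfl fun r hr => ?_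
    rw [Nat.cast_choose ℚ (by have := mem_range.1 hr; omega : r ≤ k - b)]
    have h3 : ((k - b).factorial : ℚ) ≠ 0 := by positivity
    field_simp
  rw [h, mul_sum, Finset.sum_Ico_eq_sum_range, show k + 1 - b = k - b + 1 by omega]
  refine sum_congr rfl fun r _ => ?_
  unfold cc
  rw [show b + r - b = r by omega, show k - (b + r) = k - b - r by omega, pow_add, neg_pow (b : ℚ) b]
  have : (-1 : ℚ) ^ b * (-1) ^ b = 1 := by rw [← mul_pow]; simp
  linear_combination (- (b : ℚ) ^ b / b.factorial * ((-(b : ℚ)) ^ r * (k : ℚ) ^ (k - b - r) /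
      ((r.factorial : ℚ) * ((k - b - r).factorial : ℚ)))) * this

lemma conv_general (k : ℕ) (w : ℕ → ℚ) :
    ∑ b ∈ range (k + 1), cc b * cc (k - b) * w b = ∑ q ∈ range (k + 1),
      ((k : ℚ) ^ (k - q) / ((k - q).factorial : ℚ)) * ∑ b ∈ range (q + 1),
      ((-1 : ℚ) ^ b * (-(b : ℚ)) ^ q / ((b.factorial : ℚ) * ((q - b).factorial : ℚ))) * w b := by
  have h1 : ∀ b ∈ range (k + 1), cc b * cc (k - b) * w b = ∑ q ∈ Ico b (k + 1),
    ((k : ℚ) ^ (k - q) / ((k - q).factorial : ℚ)) *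
    (((-1 : ℚ) ^ b * (-(b : ℚ)) ^ q / ((b.factorial : ℚ) * ((q - b).factorial : ℚ))) * w b) := by
    intro b hb
    rw [cc_mul k b (by have := mem_range.1 hb; omega), sum_mul]
    exact sum_congr rfl fun _ _ => by ring
  rw [sum_congr rfl h1]
  simp only [mul_sum]
  apply Finset.sum_comm'
  intro x y
  simp only [mem_range, mem_Ico]
  omega

/-- first convolution identity -/
lemma conv1 (k : ℕ) (hk : 0 < k) :
    ∑ b ∈ Ico 1 k, cc b * cc (k - b) / b = cc k * (1 - 1 / k) := by
  have h := conv_general k (fun b => 1 / (b : ℚ))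
  have hk' : (k : ℚ) ≠ 0 := by positivity
  have hr : ∑ q ∈ range (k + 1), ((k : ℚ) ^ (k - q) / ((k - q).factorial : ℚ)) * ∑ b ∈ range (q + 1),
      ((-1 : ℚ) ^ b * (-(b : ℚ)) ^ q / ((b.factorial : ℚ) * ((q - b).factorial : ℚ))) * (1 / (b : ℚ))
      = cc k := by
    rw [sum_eq_single 1]
    · simp [sum_range_succ, cc]
      obtain ⟨m, rfl⟩ : ∃ m, k = m + 1 := ⟨k - 1, by omega⟩
      rw [Nat.factorial_succ]
      simp only [Nat.add_sub_cancel, pow_succ]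
      push_cast at hk' ⊢
      have : (m.factorial : ℚ) ≠ 0 := by positivity
      field_simp
    · intro q hq hq1
      rcases Nat.eq_zero_or_pos q with rfl | hq0
      · simp
      · have hd := diff_range q (q - 1) (by omega)
        have : ∑ b ∈ range (q + 1), ((-1 : ℚ) ^ b * (-(b : ℚ)) ^ q /
            ((b.factorial : ℚ) * ((q - b).factorial : ℚ))) * (1 / (b : ℚ)) = 0 := by
          rw [← mul_zero ((-1 : ℚ) ^ q), ← hd, mul_sum]
          refine sum_congr rfl fun b _ => ?_
          rw [neg_pow (b : ℚ)]
          rcases Nat.eq_zero_or_pos b with rfl | hb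
          · simp [show q - 1 ≠ 0 by omega]
          · have hb' : (b : ℚ) ≠ 0 := by positivity
            have : (b : ℚ) ^ q = (b : ℚ) ^ (q - 1) * b := by
              rw [← pow_succ]; congr 1; omega
            rw [this]; field_simp
        rw [this, mul_zero]
    · intro h; simp at h; omega
  rw [hr, sum_range_succ, Finset.range_eq_Ico, Finset.sum_eq_sum_Ico_succ_bot hk] at h
  simp [cc] at h
  have e : ∑ b ∈ Ico 1 k, cc b * cc (k - b) / b = ∑ x ∈ Ico 1 k, (x : ℚ) ^ x / x.factorial *
      ((k - x : ℕ) ^ (k - x) / ((k - x).factorial : ℚ)) * (x : ℚ)⁻¹ := sum_congr rfl fun b _ => by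
        unfold cc; rw [div_eq_mul_inv _ (b : ℚ)]
  rw [e, mul_sub, eq_sub_iff_add_eq]
  unfold cc
  rw [mul_one, one_div]
  exact h

lemma conv_half (k l : ℕ) (hl : 0 < l) :
    cc l * ∑ b ∈ range (k + 1), cc b * cc (k - b) * (l / (b + l)) =
    ∑ q ∈ range (k + 1), (l : ℚ) ^ (l + q) / ((l + q).factorial : ℚ) *
      ((k : ℚ) ^ (k - q) / ((k - q).factorial : ℚ)) := by
  have hl' : (0 : ℚ) < l := by positivity
  rw [conv_general k (fun b => (l : ℚ) / (b + l)), mul_sum]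
  refine sum_congr rfl fun q _ => ?_
  have h := partialj q l hl' q le_rfl
  have e : ∑ b ∈ range (q + 1), ((-1 : ℚ) ^ b * (-(b : ℚ)) ^ q /
      ((b.factorial : ℚ) * ((q - b).factorial : ℚ))) * ((l : ℚ) / (b + l)) =
      l * ((l : ℚ) ^ q / ∏ i ∈ range (q + 1), ((l : ℚ) + i)) := by
    rw [← h, mul_sum]
    refine sum_congr rfl fun b _ => ?_
    rw [add_comm (b : ℚ)]; ring
  have hf : ∀ q : ℕ, (l.factorial : ℚ) * ∏ i ∈ range (q + 1), ((l : ℚ) + i) = l * (l + q).factorial := by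
    intro q
    induction q with
    | zero => simp [mul_comm]
    | succ q ih =>
      rw [prod_range_succ, ← mul_assoc, ih, ← add_assoc, Nat.factorial_succ]
      push_cast; ring
  have hp : 0 < ∏ i ∈ range (q + 1), ((l : ℚ) + i) := prod_pos fun i _ => by positivity
  rw [e]
  unfold cc
  have h1 : (l.factorial : ℚ) ≠ 0 := by positivity
  have h2 : ((l + q).factorial : ℚ) ≠ 0 := by positivity
  have h4 : (l : ℚ) ^ l / l.factorial * (l * ((l : ℚ) ^ q / ∏ i ∈ range (q + 1), ((l : ℚ) + i))) =
      (l : ℚ) ^ (l + q) / ((l + q).factorial : ℚ) := by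
    rw [pow_add]
    field_simp
    linear_combination (-1) * hf q
  rw [← h4]; ring

lemma binom_cc (n : ℕ) (k l : ℕ) (hn : n = k + l) : cc n = ∑ i ∈ range (n + 1),
    (l : ℚ) ^ i / (i.factorial : ℚ) * ((k : ℚ) ^ (n - i) / ((n - i).factorial : ℚ)) := by
  have e : (n : ℚ) = (l : ℚ) + k := by rw [hn]; push_cast; ring
  unfold cc
  rw [e, add_pow, sum_div]
  refine sum_congr rfl fun r hr => ?_
  rw [Nat.cast_choose ℚ (by have := mem_range.1 hr; omega : r ≤ n)]
  have h3 : (n.factorial : ℚ) ≠ 0 := by positivity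
  field_simp

lemma conv_all (k l : ℕ) (hk : 0 < k) (hl : 0 < l) :
    cc l * ∑ b ∈ range (k + 1), cc b * cc (k - b) * (l / (b + l)) +
    cc k * ∑ b ∈ range (l + 1), cc b * cc (l - b) * (k / (b + k)) = cc (k + l) + cc k * cc l := by
  rw [conv_half k l hl, conv_half l k hk, binom_cc (k + l) k l rfl]
  have e2 : ∑ q ∈ range (l + 1), (k : ℚ) ^ (k + q) / ((k + q).factorial : ℚ) *
      ((l : ℚ) ^ (l - q) / ((l - q).factorial : ℚ)) = ∑ i ∈ range (l + 1),
      (l : ℚ) ^ i / (i.factorial : ℚ) * ((k : ℚ) ^ (k + l - i) / ((k + l - i).factorial : ℚ)) := by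
    rw [← Finset.sum_range_reflect]
    refine sum_congr rfl fun i hi => ?_
    have := mem_range.1 hi
    rw [show l + 1 - 1 - i = l - i by omega, show k + (l - i) = k + l - i by omega,
      show l - (l - i) = i by omega]; ring
  have e1 : ∑ q ∈ range (k + 1), (l : ℚ) ^ (l + q) / ((l + q).factorial : ℚ) *
      ((k : ℚ) ^ (k - q) / ((k - q).factorial : ℚ)) = ∑ i ∈ Ico l (k + l + 1),
      (l : ℚ) ^ i / (i.factorial : ℚ) * ((k : ℚ) ^ (k + l - i) / ((k + l - i).factorial : ℚ)) := by
    rw [Finset.sum_Ico_eq_sum_range, show k + l + 1 - l = k + 1 by omega]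
    refine sum_congr rfl fun i hi => ?_
    rw [show k + l - (l + i) = k - i by omega]
  rw [e1, e2, sum_range_succ, ← sum_range_add_sum_Ico _ (show l ≤ k + l + 1 by omega)]
  rw [show k + l - l = k by omega]
  unfold cc
  ring

lemma conv_ico (k l : ℕ) (hk : 0 < k) (hl : 0 < l) :
    ∑ b ∈ range (k + 1), cc b * cc (k - b) * ((l : ℚ) / (b + l)) =
      cc k + ∑ b ∈ Ico 1 k, cc b * cc (k - b) * ((l : ℚ) / (b + l)) + cc k * (l / (k + l)) := by
  rw [sum_range_succ, Finset.range_eq_Ico, Finset.sum_eq_sum_Ico_succ_bot hk]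
  have : (l : ℚ) ≠ 0 := by positivity
  have c0 : cc 0 = 1 := by simp [cc]
  simp [c0, this]

/-- second convolution identity -/
lemma conv2 (k l : ℕ) (hk : 0 < k) (hl : 0 < l) :
    cc (k + l) = 2 * (cc k * cc l) + cc l * ∑ b ∈ Ico 1 k, cc b * cc (k - b) * ((l : ℚ) / (b + l)) +
      cc k * ∑ b ∈ Ico 1 l, cc b * cc (l - b) * ((k : ℚ) / (b + k)) := by
  have h := conv_all k l hk hl
  rw [conv_ico k l hk hl, conv_ico l k hl hk] at h
  have : cc l * (cc k * ((l : ℚ) / (k + l))) + cc k * (cc l * ((k : ℚ) / (l + k))) = cc k * cc l := by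
    have : (k : ℚ) + l ≠ 0 := by positivity
    have : (l : ℚ) + k ≠ 0 := by positivity
    field_simp; ring
  linear_combination -h + this

end Hur

namespace Hur
open Finset

/-- the weight of a cycle of length `k` -/
def gg (k : ℕ) : ℚ := k * cc k

lemma gg_pos (k : ℕ) (hk : 0 < k) : 0 < gg k := by
  have := cc_pos k
  unfold gg; positivity

section
variable {ι : Type*} [DecidableEq ι]

/-- the sum over the splittings of the other cycles -/
def XX (a : ι → ℕ) (D : Finset ι) (x y : ℕ) : ℚ :=
  ∑ S ∈ D.powerset, ((x : ℚ) + ∑ i ∈ S, (a i : ℚ)) ^ ((S.card : ℤ) - 2) *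
    ((y : ℚ) + ∑ i ∈ D \ S, (a i : ℚ)) ^ (((D \ S).card : ℤ) - 2)

/-- asymmetric variant -/
def QQ (a : ι → ℕ) (D : Finset ι) (x y : ℕ) : ℚ :=
  ∑ S ∈ D.powerset, ((x : ℚ) + ∑ i ∈ S, (a i : ℚ)) ^ ((S.card : ℤ) - 2) *
    ((y : ℚ) + ∑ i ∈ D \ S, (a i : ℚ)) ^ (((D \ S).card : ℤ) - 1)

lemma XX_eq (a : ι → ℕ) (D : Finset ι) (x y : ℕ) (hx : 0 < x) (hy : 0 < y) :
    ((x : ℚ) + y + ∑ i ∈ D, (a i : ℚ)) * XX a D x y = QQ a D x y + QQ a D y x := by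
  have hpos : ∀ (x : ℕ) (_ : 0 < x) (S : Finset ι), (0 : ℚ) < x + ∑ i ∈ S, (a i : ℚ) := by
    intro x hx S
    positivity
  have hz : ∀ (w : ℚ) (_ : 0 < w) (k : ℤ), w ^ (k - 1) = w * w ^ (k - 2) := by
    intro w hw k
    rw [← zpow_one_add₀ hw.ne']; congr 1; ring
  have e : QQ a D y x = ∑ S ∈ D.powerset, ((y : ℚ) + ∑ i ∈ D \ S, (a i : ℚ)) ^ (((D \ S).card : ℤ) - 2) *
    ((x : ℚ) + ∑ i ∈ S, (a i : ℚ)) ^ ((S.card : ℤ) - 1) := by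
    unfold QQ
    refine Finset.sum_nbij' (fun S => D \ S) (fun S => D \ S) ?_ ?_ ?_ ?_ ?_
    · intro S _; simp
    · intro S _; simp
    · intro S hS; simpa using mem_powerset.1 hS
    · intro S hS; simpa using mem_powerset.1 hS
    · intro S hS
      rw [Finset.sdiff_sdiff_eq_self (mem_powerset.1 hS)]
  rw [e]
  unfold XX QQ
  rw [mul_sum, ← sum_add_distrib]
  refine sum_congr rfl fun S hS => ?_
  rw [hz _ (hpos y hy _), hz _ (hpos x hx _), ← sum_sdiff (mem_powerset.1 hS)]
  ring

lemma QQ_eq (a : ι → ℕ) (ha : ∀ i, 0 < a i) (D : Finset ι) (x y : ℕ) (hx : 0 < x) (hy : 0 < y) (n : ℚ)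
    (hn : n = (x : ℚ) + y + ∑ i ∈ D, (a i : ℚ)) :
    QQ a D x y = n ^ ((D.card : ℤ) - 2) * (((x : ℚ) + y) * n / (x ^ 2 * y) -
      ∑ j ∈ D, (a j : ℚ) / (x + a j) * ((x : ℚ) + y + a j) / (x * y)) := by
  have h := abelQ (fun i => (a i : ℚ)) (fun i => by exact_mod_cast ha i) D x y
    (by exact_mod_cast hx) (by exact_mod_cast hy)
  rw [← hn] at h
  have hx' : (0 : ℚ) < x := by exact_mod_cast hx
  have hy' : (0 : ℚ) < y := by exact_mod_cast hy
  have hn' : 0 < n := by rw [hn]; positivity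
  have hz : n ^ ((D.card : ℤ) - 1) = n * n ^ ((D.card : ℤ) - 2) := by
    rw [← zpow_one_add₀ hn'.ne']; congr 1; ring
  have hne : (x : ℚ) ^ 2 * y ≠ 0 := by positivity
  apply mul_left_cancel₀ hne
  unfold QQ
  rw [h, hz, mul_sub, mul_sub, mul_sum, mul_sum]
  congr 1
  · field_simp
  · refine sum_congr rfl fun j _ => ?_
    have := ha j
    field_simp

lemma cut_sum (a : ι → ℕ) (ha : ∀ i, 0 < a i) (D : Finset ι) (k : ℕ) (hk : 0 < k) (n : ℚ)
    (hn : n = (k : ℚ) + ∑ i ∈ D, (a i : ℚ)) :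
    k * ∑ d ∈ Ico 1 k, gg d * gg (k - d) / gg k * XX a D d (k - d) =
    2 * n ^ ((D.card : ℤ) - 2) * ((k - 1) - (∑ j ∈ D, ((k : ℚ) + a j) / cc k *
      ∑ d ∈ Ico 1 k, cc d * cc (k - d) * ((a j : ℚ) / (d + a j))) / n) := by
  have hk' : (0 : ℚ) < k := by exact_mod_cast hk
  have hck := cc_pos k
  have hn' : 0 < n := by rw [hn]; positivity
  have h1 : n * ∑ d ∈ Ico 1 k, gg d * gg (k - d) / gg k * XX a D d (k - d) =
      2 * ∑ d ∈ Ico 1 k, gg d * gg (k - d) / gg k * QQ a D d (k - d) := by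
    have hrefl : ∑ d ∈ Ico 1 k, gg d * gg (k - d) / gg k * QQ a D (k - d) d =
        ∑ d ∈ Ico 1 k, gg d * gg (k - d) / gg k * QQ a D d (k - d) := by
      refine Finset.sum_nbij' (fun d => k - d) (fun d => k - d) ?_ ?_ ?_ ?_ ?_
      · intro d hd; simp only [mem_Ico] at hd ⊢; omega
      · intro d hd; simp only [mem_Ico] at hd ⊢; omega
      · intro d hd; simp only [mem_Ico] at hd ⊢; omega
      · intro d hd; simp only [mem_Ico] at hd ⊢; omega
      · intro d hd
        simp only [mem_Ico] at hd
        rw [show k - (k - d) = d by omega]; ring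
    rw [two_mul]
    nth_rewrite 1 [← hrefl]
    rw [← sum_add_distrib, mul_sum]
    refine sum_congr rfl fun d hd => ?_
    simp only [mem_Ico] at hd
    have := XX_eq a D d (k - d) (by omega) (by omega)
    have e : (d : ℚ) + ((k - d : ℕ) : ℚ) = k := by
      rw [← Nat.cast_add]; congr 1; omega
    rw [e, ← hn] at this
    linear_combination (gg d * gg (k - d) / gg k) * this
  have h2 : k * ∑ d ∈ Ico 1 k, gg d * gg (k - d) / gg k * QQ a D d (k - d) =
      n ^ ((D.card : ℤ) - 2) * (n * (k - 1) - ∑ j ∈ D, ((k : ℚ) + a j) / cc k *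
      ∑ d ∈ Ico 1 k, cc d * cc (k - d) * ((a j : ℚ) / (d + a j))) := by
    have hc1 := conv1 k hk
    have e1 : n * ((k : ℚ) - 1) = ∑ d ∈ Ico 1 k, n * k / cc k * (cc d * cc (k - d) / d) := by
      rw [← mul_sum, hc1]
      field_simp
    have e2 : ∑ j ∈ D, ((k : ℚ) + a j) / cc k *
      ∑ d ∈ Ico 1 k, cc d * cc (k - d) * ((a j : ℚ) / (d + a j)) =
      ∑ d ∈ Ico 1 k, ∑ j ∈ D, ((k : ℚ) + a j) / cc k * (cc d * cc (k - d) * ((a j : ℚ) / (d + a j))) := by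
      rw [sum_comm]
      exact sum_congr rfl fun j _ => by rw [mul_sum]
    rw [e1, e2, ← sum_sub_distrib, mul_sum, mul_sum]
    refine sum_congr rfl fun d hd => ?_
    simp only [mem_Ico] at hd
    have e : (d : ℚ) + ((k - d : ℕ) : ℚ) = k := by
      rw [← Nat.cast_add]; congr 1; omega
    rw [QQ_eq a ha D d (k - d) (by omega) (by omega) n (by rw [e, hn])]
    rw [e]
    have hd' : (0 : ℚ) < d := by exact_mod_cast (by omega : 0 < d)
    have hd2 : (0 : ℚ) < ((k - d : ℕ) : ℚ) := by exact_mod_cast (by omega : 0 < k - d)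
    unfold gg
    generalize ((k - d : ℕ) : ℚ) = y at *
    rw [mul_left_comm _ (n ^ _), mul_left_comm _ (n ^ _)]
    congr 1
    rw [mul_sub, mul_sub, mul_sum, mul_sum]
    congr 1
    · field_simp
    · refine sum_congr rfl fun j _ => ?_
      field_simp
  have h3 : n * (k * ∑ d ∈ Ico 1 k, gg d * gg (k - d) / gg k * XX a D d (k - d)) =
      n * (2 * n ^ ((D.card : ℤ) - 2) * ((k - 1) - (∑ j ∈ D, ((k : ℚ) + a j) / cc k *
      ∑ d ∈ Ico 1 k, cc d * cc (k - d) * ((a j : ℚ) / (d + a j))) / n)) := by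
    rw [mul_left_comm, h1, mul_left_comm, h2]
    field_simp
  exact mul_left_cancel₀ hn'.ne' h3

/-- the local identity -/
lemma local_identity (a : ι → ℕ) (ha : ∀ i, 0 < a i) (C : Finset ι) (hC : C.Nonempty) (n : ℚ)
    (hn : n = ∑ i ∈ C, (a i : ℚ)) :
    (∑ i ∈ C, (a i : ℚ) * ((∑ j ∈ C.erase i, (a j : ℚ) * (gg (a i + a j) / (gg (a i) * gg (a j)) / n)) +
      (∑ d ∈ Ico 1 (a i), gg d * gg (a i - d) / gg (a i) * XX a (C.erase i) d (a i - d)) /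
        n ^ ((C.card : ℤ) - 3))) = 2 * (n + C.card - 2) := by
  have ha' : ∀ i, (0 : ℚ) < a i := fun i => by exact_mod_cast ha i
  have hn' : 0 < n := by rw [hn]; exact sum_pos (fun i _ => ha' i) hC
  set Y : ι → ι → ℚ := fun i j => ∑ d ∈ Ico 1 (a i), cc d * cc (a i - d) * ((a j : ℚ) / (d + a j)) with hY
  have h1 : ∀ i ∈ C, (a i : ℚ) * ((∑ j ∈ C.erase i, (a j : ℚ) * (gg (a i + a j) / (gg (a i) * gg (a j)) / n)) +
      (∑ d ∈ Ico 1 (a i), gg d * gg (a i - d) / gg (a i) * XX a (C.erase i) d (a i - d)) /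
        n ^ ((C.card : ℤ) - 3)) = 2 * ((a i : ℚ) - 1) + ∑ j ∈ C.erase i, ((a i : ℚ) + a j) / n *
        (cc (a i + a j) / (cc (a i) * cc (a j)) - 2 * (Y i j / cc (a i))) := by
    intro i hi
    have hcs := cut_sum a ha (C.erase i) (a i) (ha i) n (by rw [hn, add_sum_erase C (fun i => (a i : ℚ)) hi])
    have hc : 0 < C.card := card_pos.2 hC
    have e0 : (((C.erase i).card : ℕ) : ℤ) - 2 = (C.card : ℤ) - 3 := by
      rw [card_erase_of_mem hi]; omega
    rw [e0] at hcs
    have hp : n ^ ((C.card : ℤ) - 3) ≠ 0 := (zpow_pos hn' _).ne'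
    rw [mul_add, ← mul_div_assoc _ _ (n ^ _), hcs]
    rw [mul_right_comm, mul_div_cancel_right₀ _ hp, mul_sum, mul_sub, add_comm, sub_add]
    rw [sub_eq_add_neg]
    congr 1
    rw [sum_div, mul_sum, ← sum_sub_distrib, ← sum_neg_distrib]
    refine sum_congr rfl fun j _ => ?_
    have := cc_pos (a i)
    have := cc_pos (a j)
    have := ha' i
    have := ha' j
    simp only [hY]
    unfold gg
    push_cast
    generalize (∑ d ∈ Ico 1 (a i), cc d * cc (a i - d) * ((a j : ℚ) / (d + a j))) = w
    field_simp
    ring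
  rw [sum_congr rfl h1, sum_add_distrib]
  have h2 : ∑ i ∈ C, ∑ j ∈ C.erase i, ((a i : ℚ) + a j) / n *
        (cc (a i + a j) / (cc (a i) * cc (a j)) - 2 * (Y i j / cc (a i))) =
      ∑ i ∈ C, ∑ j ∈ C.erase i, 2 * ((a i : ℚ) + a j) / n := by
    have hsw : ∀ G : ι → ι → ℚ, ∑ i ∈ C, ∑ j ∈ C.erase i, G i j = ∑ i ∈ C, ∑ j ∈ C.erase i, G j i := by
      intro G
      apply Finset.sum_comm'
      intro x y
      simp only [mem_erase]
      tauto
    have hhalf : ∀ G : ι → ι → ℚ, ∑ i ∈ C, ∑ j ∈ C.erase i, G i j =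
        ∑ i ∈ C, ∑ j ∈ C.erase i, (G i j + G j i) / 2 := by
      intro G
      have := hsw G
      simp only [← sum_div, sum_add_distrib]
      rw [← this]; ring
    rw [hhalf]
    refine sum_congr rfl fun i _ => sum_congr rfl fun j _ => ?_
    have h := conv2 (a i) (a j) (ha i) (ha j)
    have h' : cc (a i + a j) = 2 * (cc (a i) * cc (a j)) + cc (a j) * Y i j + cc (a i) * Y j i := h
    have := cc_pos (a i)
    have := cc_pos (a j)
    rw [add_comm (a j) (a i), h']
    field_simp
    ring
  rw [h2]
  have h3 : ∀ i ∈ C, ∑ j ∈ C.erase i, 2 * ((a i : ℚ) + a j) / n =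
      (∑ j ∈ C, 2 * ((a i : ℚ) + a j) / n) - 4 * a i / n := by
    intro i hi
    rw [← add_sum_erase C _ hi]; ring
  rw [sum_congr rfl h3, sum_sub_distrib]
  simp only [← sum_div, ← mul_sum, sum_sub_distrib, sum_add_distrib, sum_const, nsmul_eq_mul]
  rw [← hn]
  field_simp
  ring

end
end Hur

namespace Hur
open Finset Equiv Equiv.Perm
open scoped Classical
set_option linter.unusedSectionVars false
set_option linter.unusedVariables false

noncomputable section
variable {α : Type*} [Fintype α] [DecidableEq α]

instance : Fintype (Setoid α) :=
  Fintype.ofInjective (fun s : Setoid α => fun x y => s x y)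
    (fun s t h => Setoid.ext fun x y => by
      have := congrFun (congrFun h x) y
      exact Iff.of_eq this)

/-- the class of `x` -/
def cls (s : Setoid α) (x : α) : Finset α := univ.filter (fun y => s x y)

/-- the set of classes -/
def PP (s : Setoid α) : Finset (Finset α) := univ.image (cls s)

/-- cycle partition -/
def cyc (σ : Perm α) : Setoid α := SameCycle.setoid σ


lemma mem_cls {s : Setoid α} {x y : α} : y ∈ cls s x ↔ s x y := by simp [cls]


lemma self_mem_cls (s : Setoid α) (x : α) : x ∈ cls s x := mem_cls.2 (s.refl' x)


lemma cls_eq_iff {s : Setoid α} {x y : α} : cls s x = cls s y ↔ s x y := by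
  constructor
  · intro h
    rw [← mem_cls, h]; exact self_mem_cls s y
  · intro h
    ext z
    rw [mem_cls, mem_cls]
    exact ⟨fun hz => s.trans' (s.symm' h) hz, fun hz => s.trans' h hz⟩

lemma cls_mem_PP (s : Setoid α) (x : α) : cls s x ∈ PP s := mem_image_of_mem _ (mem_univ _)

lemma mem_PP {s : Setoid α} {B : Finset α} : B ∈ PP s ↔ ∃ x, cls s x = B := by simp [PP]

lemma PP_eq_cls {s : Setoid α} {B : Finset α} (hB : B ∈ PP s) {x : α} (hx : x ∈ B) : B = cls s x := by
  obtain ⟨y, rfl⟩ := mem_PP.1 hB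
  exact cls_eq_iff.2 (mem_cls.1 hx)

lemma PP_nonempty {s : Setoid α} {B : Finset α} (hB : B ∈ PP s) : B.Nonempty := by
  obtain ⟨y, rfl⟩ := mem_PP.1 hB
  exact ⟨y, self_mem_cls s y⟩

lemma PP_card_pos {s : Setoid α} {B : Finset α} (hB : B ∈ PP s) : 0 < B.card :=
  card_pos.2 (PP_nonempty hB)

lemma PP_disj {s : Setoid α} {A B : Finset α} (hA : A ∈ PP s) (hB : B ∈ PP s) (h : A ≠ B) :
    Disjoint A B := by
  rw [Finset.disjoint_left]
  intro x hx hx'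
  exact h ((PP_eq_cls hA hx).trans (PP_eq_cls hB hx').symm)

/-- classes of `s` inside `B` -/
def sub (s : Setoid α) (B : Finset α) : Finset (Finset α) := (PP s).filter (fun γ => γ ⊆ B)

lemma mem_sub {s : Setoid α} {B γ : Finset α} : γ ∈ sub s B ↔ γ ∈ PP s ∧ γ ⊆ B := by simp [sub]

/-- `B` is a union of classes -/
def Inv (s : Setoid α) (B : Finset α) : Prop := ∀ x ∈ B, ∀ y, s x y → y ∈ B

lemma inv_of_le {s t : Setoid α} (h : s ≤ t) {B : Finset α} (hB : B ∈ PP t) : Inv s B := by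
  intro x hx y hxy
  rw [PP_eq_cls hB hx, mem_cls]
  exact h hxy

lemma inv_sub {s : Setoid α} {B : Finset α} (h : Inv s B) {x : α} (hx : x ∈ B) : cls s x ∈ sub s B :=
  mem_sub.2 ⟨cls_mem_PP s x, fun y hy => h x hx y (mem_cls.1 hy)⟩

lemma sum_inv (s : Setoid α) {B : Finset α} (h : Inv s B) (F : Finset α → ℚ) :
    ∑ x ∈ B, F (cls s x) = ∑ γ ∈ sub s B, (γ.card : ℚ) * F γ := by
  rw [← Finset.sum_fiberwise_of_maps_to (g := cls s) (t := sub s B) (fun x hx => inv_sub h hx)]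
  refine sum_congr rfl fun γ hγ => ?_
  have e : B.filter (fun x => cls s x = γ) = γ := by
    ext x
    rw [mem_sub] at hγ
    simp only [mem_filter]
    constructor
    · rintro ⟨_, rfl⟩; exact self_mem_cls s x
    · intro hx; exact ⟨hγ.2 hx, (PP_eq_cls hγ.1 hx).symm⟩
  rw [sum_congr rfl (fun x hx => by rw [(mem_filter.1 hx).2] : ∀ x ∈ B.filter (fun x => cls s x = γ),
    F (cls s x) = F γ), sum_const, e, nsmul_eq_mul]

lemma sum_all (s : Setoid α) (F : Finset α → ℚ) :
    ∑ x, F (cls s x) = ∑ γ ∈ PP s, (γ.card : ℚ) * F γ := by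
  have := sum_inv s (B := univ) (fun _ _ _ _ => mem_univ _) F
  rw [this]; congr 1
  ext γ; simp [mem_sub]

lemma card_inv (s : Setoid α) {B : Finset α} (h : Inv s B) :
    (B.card : ℚ) = ∑ γ ∈ sub s B, (γ.card : ℚ) := by
  have := sum_inv s h (fun _ => 1)
  simpa using this

lemma sum_sub_univ {s t : Setoid α} (h : s ≤ t) (F : Finset α → ℚ) :
    ∑ B ∈ PP t, ∑ γ ∈ sub s B, F γ = ∑ γ ∈ PP s, F γ := by
  rw [← Finset.sum_biUnion]
  · congr 1
    ext γ
    simp only [mem_biUnion, mem_sub]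
    constructor
    · rintro ⟨_, _, h, _⟩; exact h
    · intro hγ
      obtain ⟨x, rfl⟩ := mem_PP.1 hγ
      refine ⟨cls t x, cls_mem_PP t x, hγ, fun y hy => ?_⟩
      rw [mem_cls] at *; exact h hy
  · intro A hA B hB hAB
    rw [Function.onFun, Finset.disjoint_left]
    intro γ h1 h2
    rw [mem_sub] at h1 h2
    obtain ⟨x, hx⟩ := PP_nonempty h1.1
    exact Finset.disjoint_left.1 (PP_disj hA hB hAB) (h1.2 hx) (h2.2 hx)

lemma PP_card_le {s t : Setoid α} (h : s ≤ t) : (PP t).card ≤ (PP s).card := by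
  have : PP t ⊆ (PP s).image (fun γ => univ.filter (fun y => ∃ x ∈ γ, t x y)) := by
    intro B hB
    obtain ⟨x, rfl⟩ := mem_PP.1 hB
    rw [mem_image]
    refine ⟨cls s x, cls_mem_PP s x, ?_⟩
    ext y
    simp only [mem_filter, mem_univ, true_and, mem_cls]
    constructor
    · rintro ⟨z, h1, h2⟩; exact t.trans' (h h1) h2
    · intro hy; exact ⟨x, s.refl' x, hy⟩
  exact (card_le_card this).trans card_image_le

lemma PP_card_bot_iff {s : Setoid α} : (PP s).card ≤ Fintype.card α ∧
    ((PP s).card = Fintype.card α → s = ⊥) := by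
  refine ⟨card_image_le, fun h => ?_⟩
  have := (Finset.card_image_iff).1 (h : (univ.image (cls s)).card = (univ : Finset α).card)
  rw [_root_.eq_bot_iff]
  intro x y hxy
  exact this (mem_univ _) (mem_univ _) (cls_eq_iff.2 hxy)

lemma cls_bot (x : α) : cls (⊥ : Setoid α) x = {x} := by
  ext y; rw [mem_cls, Setoid.bot_def]; simp [eq_comm]

lemma PP_bot_card : (PP (⊥ : Setoid α)).card = Fintype.card α := by
  refine (Finset.card_image_iff).2 ?_
  intro x _ y _ h
  simpa [cls_bot] using h


lemma cyc_le_iff {τ : Perm α} {r : Setoid α} : cyc τ ≤ r ↔ ∀ x, r x (τ x) := by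
  constructor
  · intro h x
    exact h (show SameCycle τ x (τ x) from ⟨1, by simp⟩)
  · intro h x y hxy
    have hn : ∀ (k : ℕ) x, r x ((τ ^ k) x) := by
      intro k
      induction k with
      | zero => intro x; exact r.refl' x
      | succ k ih =>
        intro x
        rw [pow_succ', Perm.mul_apply]
        exact r.trans' (ih x) (h _)
    obtain ⟨i, hi⟩ := (hxy : SameCycle τ x y)
    rcases i with k | k
    · have := hn k x
      rw [← hi]; simpa using this
    · have := hn (k + 1) y
      rw [← hi] at this ⊢
      apply r.symm'
      have e : (τ ^ (k + 1)) ((τ ^ (Int.negSucc k)) x) = x := by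
        rw [zpow_negSucc]; simp
      rwa [e] at this


lemma swap_le_iff {a b : α} {r : Setoid α} : cyc (swap a b) ≤ r ↔ r a b := by
  rw [cyc_le_iff]
  constructor
  · intro h; simpa using h a
  · intro h x
    rcases eq_or_ne x a with rfl | h1
    · simpa using h
    rcases eq_or_ne x b with rfl | h2
    · simpa using r.symm' h
    · rw [swap_apply_of_ne_of_ne h1 h2]

/-- `s` arises from `t` by splitting a class, separating `a` from `b` -/
def Spl (s t : Setoid α) (a b : α) : Prop := ¬ s a b ∧ s ⊔ cyc (swap a b) = t

lemma sup_apply {s : Setoid α} {a b x y : α} (h : (s ⊔ cyc (swap a b)) x y) :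
    s x y ∨ (s a x ∧ s b y) ∨ (s b x ∧ s a y) := by
  set f : α → Finset α := fun x => if s b x then cls s a else cls s x with hf
  have hle : s ⊔ cyc (swap a b) ≤ Setoid.ker f := by
    apply sup_le
    · intro x y hxy
      rw [Setoid.ker_def]
      simp only [hf]
      have : s b x ↔ s b y := ⟨fun h => s.trans' h hxy, fun h => s.trans' h (s.symm' hxy)⟩
      rw [if_congr this rfl rfl, cls_eq_iff.2 hxy]
    · rw [swap_le_iff, Setoid.ker_def]
      simp only [hf]
      rw [if_pos (s.refl' b)]
      split_ifs <;> rfl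
  have := hle h
  rw [Setoid.ker_def] at this
  simp only [hf] at this
  split_ifs at this with h1 h2 h2
  · exact Or.inl (s.trans' (s.symm' h1) h2)
  · exact Or.inr (Or.inr ⟨h1, cls_eq_iff.1 this⟩)
  · exact Or.inr (Or.inl ⟨s.symm' (cls_eq_iff.1 this), h2⟩)
  · exact Or.inl (cls_eq_iff.1 this)

section split
variable {s t : Setoid α} {a b : α}


lemma Spl.le (h : Spl s t a b) : s ≤ t := h.2 ▸ le_sup_left

lemma Spl.rel (h : Spl s t a b) : t a b := swap_le_iff.1 (h.2 ▸ le_sup_right)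

lemma Spl.cls_a (h : Spl s t a b) : cls t a = cls s a ∪ cls s b := by
  ext y
  rw [mem_union, mem_cls, mem_cls, mem_cls]
  constructor
  · intro hy
    rw [← h.2] at hy
    rcases sup_apply hy with h1 | h1 | h1
    · exact Or.inl h1
    · exact Or.inr h1.2
    · exact Or.inl h1.2
  · rintro (hy | hy)
    · exact h.le hy
    · exact t.trans' h.rel (h.le hy)

lemma Spl.disj (h : Spl s t a b) : Disjoint (cls s a) (cls s b) :=
  PP_disj (cls_mem_PP s a) (cls_mem_PP s b) (fun e => h.1 (cls_eq_iff.1 e))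

lemma Spl.cls_other (h : Spl s t a b) {x : α} (hx : ¬ t a x) : cls t x = cls s x := by
  ext y
  rw [mem_cls, mem_cls]
  refine ⟨fun hy => ?_, fun hy => h.le hy⟩
  rw [← h.2] at hy
  rcases sup_apply hy with h1 | h1 | h1
  · exact h1
  · exact absurd (h.le h1.1) hx
  · exact absurd (t.trans' h.rel (h.le h1.1)) hx

lemma Spl.notMem_a (h : Spl s t a b) : cls s a ∉ (PP t).erase (cls t a) := by
  intro hm
  rw [mem_erase] at hm
  exact hm.1 (PP_eq_cls hm.2 (self_mem_cls s a))

lemma Spl.notMem_b (h : Spl s t a b) : cls s b ∉ (PP t).erase (cls t a) := by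
  intro hm
  rw [mem_erase] at hm
  exact hm.1 ((PP_eq_cls hm.2 (self_mem_cls s b)).trans (cls_eq_iff.2 (t.symm' h.rel)))

lemma Spl.PP_eq (h : Spl s t a b) :
    PP s = insert (cls s a) (insert (cls s b) ((PP t).erase (cls t a))) := by
  ext γ
  simp only [mem_insert, mem_erase]
  constructor
  · intro hγ
    obtain ⟨x, rfl⟩ := mem_PP.1 hγ
    by_cases hx : t a x
    · have : x ∈ cls t a := mem_cls.2 hx
      rw [h.cls_a, mem_union] at this
      rcases this with h1 | h1
      · exact Or.inl (cls_eq_iff.2 (mem_cls.1 h1)).symm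
      · exact Or.inr (Or.inl (cls_eq_iff.2 (mem_cls.1 h1)).symm)
    · refine Or.inr (Or.inr ?_)
      rw [← h.cls_other hx]
      exact ⟨fun e => hx (t.symm' (cls_eq_iff.1 e)), cls_mem_PP t x⟩
  · rintro (rfl | rfl | ⟨h1, h2⟩)
    · exact cls_mem_PP s a
    · exact cls_mem_PP s b
    · obtain ⟨x, rfl⟩ := mem_PP.1 h2
      rw [h.cls_other (fun e => h1 (cls_eq_iff.2 (t.symm' e)))]
      exact cls_mem_PP s x

lemma Spl.notMem_ab (h : Spl s t a b) : cls s a ∉ insert (cls s b) ((PP t).erase (cls t a)) := by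
  rw [mem_insert]
  rintro (e | e)
  · exact h.1 (cls_eq_iff.1 e)
  · exact h.notMem_a e

lemma Spl.card (h : Spl s t a b) : (PP s).card = (PP t).card + 1 := by
  rw [h.PP_eq, card_insert_of_notMem h.notMem_ab, card_insert_of_notMem h.notMem_b,
    card_erase_of_mem (cls_mem_PP t a)]
  have : 0 < (PP t).card := card_pos.2 ⟨_, cls_mem_PP t a⟩
  omega

lemma Spl.prod (h : Spl s t a b) (F : Finset α → ℚ) :
    ∏ γ ∈ PP s, F γ = F (cls s a) * (F (cls s b) * ∏ γ ∈ (PP t).erase (cls t a), F γ) := by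
  rw [h.PP_eq, prod_insert h.notMem_ab, prod_insert h.notMem_b]

end split

/-- cycles -/
lemma cyc_eq_image (σ : Perm α) (a : α) :
    cls (cyc σ) a = (range (Function.minimalPeriod σ a)).image (fun k => σ^[k] a) := by
  ext y
  rw [mem_cls, mem_image]
  have hp : 0 < Function.minimalPeriod σ a :=
    Function.minimalPeriod_pos_of_mem_periodicPts
      (Function.Injective.mem_periodicPts σ.injective a)
  constructor
  · intro h
    obtain ⟨i, hi⟩ := SameCycle.exists_nat_pow_eq (h : SameCycle σ a y)
    refine ⟨i % Function.minimalPeriod σ a, mem_range.2 (Nat.mod_lt _ hp), ?_⟩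
    rw [Function.iterate_mod_minimalPeriod_eq, ← hi, Perm.iterate_eq_pow]
  · rintro ⟨k, _, rfl⟩
    refine (⟨k, ?_⟩ : SameCycle σ a _)
    rw [Perm.iterate_eq_pow]; simp

lemma iter_inj (σ : Perm α) (a : α) : Set.InjOn (fun k => σ^[k] a)
    (range (Function.minimalPeriod σ a) : Finset ℕ) := by
  intro i hi j hj h
  rw [mem_coe, mem_range] at hi hj
  exact Function.iterate_injOn_Iio_minimalPeriod hi hj h

lemma card_cyc (σ : Perm α) (a : α) : (cls (cyc σ) a).card = Function.minimalPeriod σ a := by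
  rw [cyc_eq_image, card_image_of_injOn (iter_inj σ a), card_range]

lemma cut_period (σ : Perm α) (a : α) (d : ℕ) (hd : 0 < d) (hdp : d < Function.minimalPeriod σ a) :
    Function.minimalPeriod (swap a (σ^[d] a) * σ : Perm α) a = d ∧
      ¬ cyc (swap a (σ^[d] a) * σ) a (σ^[d] a) := by
  set b := σ^[d] a with hb
  set σ' : Perm α := swap a b * σ with hσ'
  have inj : ∀ i j, i < Function.minimalPeriod σ a → j < Function.minimalPeriod σ a →
      σ^[i] a = σ^[j] a → i = j := fun i j hi hj h =>
    Function.iterate_injOn_Iio_minimalPeriod hi hj h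
  have hk : ∀ k, k < d → σ'^[k] a = σ^[k] a := by
    intro k
    induction k with
    | zero => intro _; rfl
    | succ k ih =>
      intro hk
      rw [Function.iterate_succ_apply', Function.iterate_succ_apply', ih (by omega), hσ', Perm.mul_apply]
      rw [← Function.iterate_succ_apply' (⇑σ) k a]
      apply swap_apply_of_ne_of_ne
      · intro h
        have := inj (k + 1) 0 (by omega) (by omega) (by simpa using h)
        omega
      · intro h
        have := inj (k + 1) d (by omega) (by omega) h
        omega
  have hd' : σ'^[d] a = a := by
    obtain ⟨e, rfl⟩ : ∃ e, d = e + 1 := ⟨d - 1, by omega⟩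
    rw [Function.iterate_succ_apply', hk e (by omega), hσ', Perm.mul_apply,
      ← Function.iterate_succ_apply' (⇑σ) e a, ← hb]
    simp
  have hper : Function.minimalPeriod σ' a = d := by
    apply le_antisymm (Function.IsPeriodicPt.minimalPeriod_le hd hd')
    by_contra hlt
    push Not at hlt
    have hp : 0 < Function.minimalPeriod σ' a := Function.IsPeriodicPt.minimalPeriod_pos hd hd'
    have h1 := Function.iterate_minimalPeriod (f := σ') (x := a)
    rw [hk _ hlt] at h1
    have := inj _ 0 (by omega) (by omega) h1
    omega
  refine ⟨hper, fun h => ?_⟩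
  rw [← mem_cls, cyc_eq_image, hper, mem_image] at h
  obtain ⟨k, hk1, hk2⟩ := h
  rw [mem_range] at hk1
  rw [hk k hk1] at hk2
  have := inj k d (by omega) hdp hk2
  omega

lemma join_rel (σ : Perm α) (a b : α) (h : ¬ cyc σ a b) : cyc (swap a b * σ) a b := by
  set σ' : Perm α := swap a b * σ with hσ'
  set p := Function.minimalPeriod σ a with hp
  have hp0 : 0 < p :=
    Function.minimalPeriod_pos_of_mem_periodicPts (Function.Injective.mem_periodicPts σ.injective a)
  have inj : ∀ i j, i < p → j < p → σ^[i] a = σ^[j] a → i = j := fun i j hi hj h =>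
    Function.iterate_injOn_Iio_minimalPeriod hi hj h
  have hk : ∀ k, k < p → σ'^[k] a = σ^[k] a := by
    intro k
    induction k with
    | zero => intro _; rfl
    | succ k ih =>
      intro hk
      rw [Function.iterate_succ_apply', Function.iterate_succ_apply', ih (by omega), hσ', Perm.mul_apply]
      rw [← Function.iterate_succ_apply' (⇑σ) k a]
      apply swap_apply_of_ne_of_ne
      · intro h
        have := inj (k + 1) 0 (by omega) (by omega) (by simpa using h)
        omega
      · intro h'
        refine h (⟨((k + 1 : ℕ) : ℤ), ?_⟩ : SameCycle σ a b)
        rw [← h', Perm.iterate_eq_pow, zpow_natCast]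
  have hd' : σ'^[p] a = b := by
    obtain ⟨e, he⟩ : ∃ e, p = e + 1 := ⟨p - 1, by omega⟩
    rw [he, Function.iterate_succ_apply', hk e (by omega), hσ', Perm.mul_apply,
      ← Function.iterate_succ_apply' (⇑σ) e a, Nat.succ_eq_add_one, ← he, hp, Function.iterate_minimalPeriod]
    simp
  refine (⟨(p : ℤ), ?_⟩ : SameCycle σ' a b)
  rw [zpow_natCast, ← Perm.iterate_eq_pow, hd']


lemma cyc_mul_le (σ : Perm α) (a b : α) : cyc (swap a b * σ) ≤ cyc σ ⊔ cyc (swap a b) := by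
  rw [cyc_le_iff]
  intro x
  refine Setoid.trans' _ (y := σ x) ?_ ?_
  · exact (cyc_le_iff.1 (le_sup_left : cyc σ ≤ cyc σ ⊔ cyc (swap a b))) x
  · exact (cyc_le_iff.1 (le_sup_right : cyc (swap a b) ≤ cyc σ ⊔ cyc (swap a b))) (σ x)


lemma cyc_sup (σ : Perm α) (a b : α) :
    cyc (swap a b * σ) ⊔ cyc (swap a b) = cyc σ ⊔ cyc (swap a b) := by
  apply le_antisymm (sup_le (cyc_mul_le σ a b) le_sup_right)
  refine sup_le ?_ le_sup_right
  have := cyc_mul_le (swap a b * σ) a b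
  rwa [← mul_assoc, swap_mul_self, one_mul] at this

lemma join_spl (σ : Perm α) (a b : α) (h : ¬ cyc σ a b) : Spl (cyc σ) (cyc (swap a b * σ)) a b := by
  refine ⟨h, ?_⟩
  rw [← cyc_sup]
  exact sup_eq_left.2 (swap_le_iff.2 (join_rel σ a b h))

lemma exists_iter (σ : Perm α) {a b : α} (hab : a ≠ b) (h : cyc σ a b) :
    ∃ d, 0 < d ∧ d < Function.minimalPeriod σ a ∧ σ^[d] a = b := by
  rw [← mem_cls, cyc_eq_image, mem_image] at h
  obtain ⟨d, hd, hb⟩ := h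
  refine ⟨d, Nat.pos_of_ne_zero fun h0 => hab ?_, mem_range.1 hd, hb⟩
  rw [h0] at hb; exact hb

lemma cut_spl (σ : Perm α) {a b : α} (hab : a ≠ b) (h : cyc σ a b) :
    Spl (cyc (swap a b * σ)) (cyc σ) a b := by
  obtain ⟨d, h0, h1, rfl⟩ := exists_iter σ hab h
  refine ⟨(cut_period σ a d h0 h1).2, ?_⟩
  rw [cyc_sup]
  exact sup_eq_left.2 (swap_le_iff.2 h)

lemma cut_sum_d (σ : Perm α) (a : α) (F : ℕ → ℚ) :
    ∑ b ∈ (cls (cyc σ) a).erase a, F (cls (cyc (swap a b * σ)) a).card =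
      ∑ d ∈ Ico 1 (cls (cyc σ) a).card, F d := by
  symm
  rw [card_cyc]
  refine Finset.sum_bij (fun d _ => σ^[d] a) ?_ ?_ ?_ ?_
  · intro d hd
    rw [mem_Ico] at hd
    rw [mem_erase, cyc_eq_image]
    refine ⟨fun h => ?_, mem_image_of_mem _ (mem_range.2 hd.2)⟩
    have := Function.iterate_injOn_Iio_minimalPeriod (f := σ) (x := a)
      (show d ∈ Set.Iio _ from hd.2) (show 0 ∈ Set.Iio _ from by simp; omega) h
    omega
  · intro i hi j hj h
    rw [mem_Ico] at hi hj
    exact Function.iterate_injOn_Iio_minimalPeriod hi.2 hj.2 h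
  · intro b hb
    rw [mem_erase] at hb
    obtain ⟨d, h0, h1, h2⟩ := exists_iter σ (Ne.symm hb.1) (mem_cls.1 hb.2)
    exact ⟨d, mem_Ico.2 ⟨h0, h1⟩, h2⟩
  · intro d hd
    rw [mem_Ico] at hd
    rw [card_cyc, (cut_period σ a d hd.1 hd.2).1]

end
end Hur

namespace Hur
open Finset Equiv Equiv.Perm
open scoped Classical
set_option linter.unusedSectionVars false
set_option linter.unusedVariables false
noncomputable section
variable {α : Type*} [Fintype α] [DecidableEq α]

/-- number of classes of `s` inside `B` -/
def mm (s : Setoid α) (B : Finset α) : ℕ := (sub s B).card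

/-- the weight of a pair of partitions -/
def Wt (s t : Setoid α) : ℚ :=
  (∏ B ∈ PP t, (B.card : ℚ) ^ ((mm s B : ℤ) - 3)) * ∏ γ ∈ PP s, gg γ.card

section
variable {s t p p' : Setoid α} {a b : α}

lemma Spl.symm (h : Spl s t a b) : Spl s t b a :=
  ⟨fun hb => h.1 (s.symm' hb), by rw [swap_comm]; exact h.2⟩

lemma Spl.mem_ta (h : Spl s t a b) : b ∈ cls t a := mem_cls.2 h.rel

lemma cls_b (h : Spl s t a b) : cls t b = cls t a := cls_eq_iff.2 (t.symm' h.rel)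

lemma Spl.sub_U (h : Spl s t a b) {U : Finset α} (hU : Inv s U) (ha : a ∈ U) (hb : b ∉ U) :
    sub s U = insert (cls s a) (sub t U) := by
  ext γ
  rw [mem_insert, mem_sub, mem_sub, h.PP_eq, mem_insert, mem_insert, mem_erase]
  constructor
  · rintro ⟨h1 | h1 | h1, h2⟩
    · exact Or.inl h1
    · subst h1; exact absurd (h2 (self_mem_cls s b)) hb
    · exact Or.inr ⟨h1.2, h2⟩
  · rintro (rfl | ⟨h1, h2⟩)
    · exact ⟨Or.inl rfl, (mem_sub.1 (inv_sub hU ha)).2⟩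
    · refine ⟨Or.inr (Or.inr ⟨?_, h1⟩), h2⟩
      rintro rfl
      exact hb (h2 h.mem_ta)

lemma Spl.sa_notMem (h : Spl s t a b) (U : Finset α) : cls s a ∉ sub t U := by
  intro hm
  have := PP_eq_cls (mem_sub.1 hm).1 (self_mem_cls s a)
  exact h.1 (mem_cls.1 (this ▸ h.mem_ta))

lemma Spl.mm_U (h : Spl s t a b) {U : Finset α} (hU : Inv s U) (ha : a ∈ U) (hb : b ∉ U) :
    mm s U = mm t U + 1 := by
  rw [mm, h.sub_U hU ha hb, card_insert_of_notMem (h.sa_notMem U), mm]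

lemma Spl.card_U (h : Spl s t a b) {U : Finset α} (hU : Inv s U) (ha : a ∈ U) (hb : b ∉ U) :
    (U.card : ℚ) = (cls s a).card + ∑ γ ∈ sub t U, (γ.card : ℚ) := by
  rw [card_inv s hU, h.sub_U hU ha hb, sum_insert (h.sa_notMem U)]

lemma Spl.mm_other (h : Spl s t a b) {U : Finset α} (ha : a ∉ U) (hb : b ∉ U) :
    mm s U = mm t U := by
  rw [mm, mm]
  congr 1
  ext γ
  rw [mem_sub, mem_sub, h.PP_eq, mem_insert, mem_insert, mem_erase]
  constructor
  · rintro ⟨h1 | h1 | h1, h2⟩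
    · subst h1; exact absurd (h2 (self_mem_cls s a)) ha
    · subst h1; exact absurd (h2 (self_mem_cls s b)) hb
    · exact ⟨h1.2, h2⟩
  · rintro ⟨h1, h2⟩
    refine ⟨Or.inr (Or.inr ⟨?_, h1⟩), h2⟩
    rintro rfl
    exact hb (h2 h.mem_ta)

lemma Spl.mm_both (h : Spl s t a b) {U : Finset α} (hU : Inv t U) (ha : a ∈ U) :
    mm s U = mm t U + 1 := by
  have hta := (mem_sub.1 (inv_sub hU ha)).2
  have e : sub s U = insert (cls s a) (insert (cls s b) ((sub t U).erase (cls t a))) := by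
    ext γ
    rw [mem_sub, h.PP_eq]
    simp only [mem_insert, mem_erase, mem_sub]
    constructor
    · rintro ⟨h1 | h1 | h1, h2⟩
      · exact Or.inl h1
      · exact Or.inr (Or.inl h1)
      · exact Or.inr (Or.inr ⟨h1.1, h1.2, h2⟩)
    · rintro (rfl | rfl | h1)
      · refine ⟨Or.inl rfl, fun x hx => hta ?_⟩
        rw [h.cls_a]; exact mem_union_left _ hx
      · refine ⟨Or.inr (Or.inl rfl), fun x hx => hta ?_⟩
        rw [h.cls_a]; exact mem_union_right _ hx
      · exact ⟨Or.inr (Or.inr ⟨h1.1, h1.2.1⟩), h1.2.2⟩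
  have hb' : cls s b ∉ (sub t U).erase (cls t a) := fun hm =>
    h.symm.sa_notMem U (mem_of_mem_erase hm)
  have ha' : cls s a ∉ insert (cls s b) ((sub t U).erase (cls t a)) := by
    rw [mem_insert]
    rintro (e | hm)
    · exact h.1 (cls_eq_iff.1 e)
    · exact h.sa_notMem U (mem_of_mem_erase hm)
  have : 0 < (sub t U).card := card_pos.2 ⟨_, inv_sub hU ha⟩
  rw [mm, e, card_insert_of_notMem ha', card_insert_of_notMem hb',
    card_erase_of_mem (inv_sub hU ha), mm]
  omega

lemma Spl.card_t (h : Spl s t a b) : (cls t a).card = (cls s a).card + (cls s b).card := by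
  rw [h.cls_a, card_union_of_disjoint h.disj]

lemma gg_ne {B : Finset α} (hB : B.Nonempty) : gg B.card ≠ 0 := (gg_pos _ (card_pos.2 hB)).ne'

lemma cls_ne (s : Setoid α) (a : α) : (cls s a).Nonempty := ⟨a, self_mem_cls s a⟩

lemma cls_card_ne (s : Setoid α) (a : α) : ((cls s a).card : ℚ) ≠ 0 := by
  have := card_pos.2 (cls_ne s a)
  positivity

lemma Wt_join (h : Spl s t a b) (hp : t ≤ p) :
    Wt t p = Wt s p * (gg ((cls s a).card + (cls s b).card) /
      (gg (cls s a).card * gg (cls s b).card) / (cls p a).card) := by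
  have hab : p a b := hp h.rel
  have e1 : ∏ B ∈ (PP p).erase (cls p a), (B.card : ℚ) ^ ((mm s B : ℤ) - 3) =
      ∏ B ∈ (PP p).erase (cls p a), (B.card : ℚ) ^ ((mm t B : ℤ) - 3) := by
    refine prod_congr rfl fun B hB => ?_
    rw [mem_erase] at hB
    rw [h.mm_other]
    · intro ha; exact hB.1 (PP_eq_cls hB.2 ha)
    · intro hb; exact hB.1 ((PP_eq_cls hB.2 hb).trans (cls_eq_iff.2 (p.symm' hab)))
  rw [Wt, Wt, ← mul_prod_erase (PP p) _ (cls_mem_PP p a), ← mul_prod_erase (PP p) _ (cls_mem_PP p a),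
    e1, h.prod, ← mul_prod_erase (PP t) _ (cls_mem_PP t a), h.card_t,
    h.mm_both (inv_of_le hp (cls_mem_PP p a)) (self_mem_cls p a)]
  have := cls_card_ne p a
  have h1 := gg_ne (cls_ne s a)
  have h2 := gg_ne (cls_ne s b)
  push_cast
  rw [show ((mm t (cls p a) : ℤ) + 1 - 3) = ((mm t (cls p a) : ℤ) - 3) + 1 by ring,
    zpow_add_one₀ this]
  field_simp

lemma cut_sdiff (h : Spl s t a b) (h' : Spl p' p a b) (hs : s ≤ p') (ht : t ≤ p) (hab : t a b) :
    sub t (cls p' b) = (sub t (cls p a)).erase (cls t a) \ sub t (cls p' a) := by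
  ext γ
  rw [mem_sdiff, mem_erase, mem_sub, mem_sub, mem_sub]
  constructor
  · rintro ⟨h1, h2⟩
    refine ⟨⟨?_, h1, ?_⟩, ?_⟩
    · rintro rfl
      exact h'.1 (p'.symm' (mem_cls.1 (h2 (self_mem_cls t a))))
    · rw [h'.cls_a]; exact h2.trans subset_union_right
    · rintro ⟨_, h3⟩
      obtain ⟨x, hx⟩ := PP_nonempty h1
      exact (Finset.disjoint_left.1 h'.disj) (h3 hx) (h2 hx)
  · rintro ⟨⟨h1, h2, h3⟩, h4⟩
    refine ⟨h2, ?_⟩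
    have hγ : γ ∈ PP s := by
      rw [h.PP_eq]; simp [h1, h2]
    obtain ⟨x, rfl⟩ := mem_PP.1 hγ
    have hx := h3 (self_mem_cls s x)
    rw [h'.cls_a, mem_union] at hx
    rcases hx with hx | hx
    · exact absurd ⟨h2, (mem_sub.1 (inv_sub (inv_of_le hs (cls_mem_PP p' a)) hx)).2⟩ h4
    · exact (mem_sub.1 (inv_sub (inv_of_le hs (cls_mem_PP p' b)) hx)).2

/-- summand of `XX` -/
def XS (D S : Finset (Finset α)) (x y : ℕ) : ℚ :=
  ((x:ℚ)+∑ i ∈ S,(i.card:ℚ))^((S.card:ℤ)-2) * ((y:ℚ)+∑ i ∈ D\S,(i.card:ℚ))^(((D\S).card:ℤ)-2)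

lemma Wt_cut (h : Spl s t a b) (h' : Spl p' p a b) (hs : s ≤ p') (ht : t ≤ p) (hab : t a b) :
    Wt s p' = Wt t p * (gg (cls s a).card * gg (cls s b).card / gg (cls t a).card *
      XS ((sub t (cls p a)).erase (cls t a)) (sub t (cls p' a)) (cls s a).card (cls s b).card /
      ((cls p a).card : ℚ) ^ ((mm t (cls p a) : ℤ) - 3)) := by
  have hbU : b ∉ cls p' a := fun hb => h'.1 (mem_cls.1 hb)
  have haV : a ∉ cls p' b := fun hb => h'.1 (p'.symm' (mem_cls.1 hb))
  have iU := inv_of_le hs (cls_mem_PP p' a)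
  have iV := inv_of_le hs (cls_mem_PP p' b)
  have e1 : ∏ B ∈ (PP p).erase (cls p a), (B.card : ℚ) ^ ((mm s B : ℤ) - 3) =
      ∏ B ∈ (PP p).erase (cls p a), (B.card : ℚ) ^ ((mm t B : ℤ) - 3) := by
    refine prod_congr rfl fun B hB => ?_
    rw [mem_erase] at hB
    rw [h.mm_other]
    · intro ha; exact hB.1 (PP_eq_cls hB.2 ha)
    · intro hb; exact hB.1 ((PP_eq_cls hB.2 hb).trans (cls_eq_iff.2 (p.symm' (ht hab))))
  rw [Wt, Wt, h'.prod (fun B => (B.card : ℚ) ^ ((mm s B : ℤ) - 3)),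
    ← mul_prod_erase (PP p) _ (cls_mem_PP p a),
    e1, h.prod, ← mul_prod_erase (PP t) _ (cls_mem_PP t a), XS,
    ← cut_sdiff h h' hs ht hab,
    h.mm_U iU (self_mem_cls p' a) hbU, h.symm.mm_U iV (self_mem_cls p' b) haV,
    h.card_U iU (self_mem_cls p' a) hbU, h.symm.card_U iV (self_mem_cls p' b) haV]
  have := zpow_ne_zero ((mm t (cls p a) : ℤ) - 3) (cls_card_ne p a)
  have h1 := gg_ne (cls_ne t a)
  simp only [mm] at *
  push_cast
  rw [show (((sub t (cls p' a)).card : ℤ) + 1 - 3) = ((sub t (cls p' a)).card : ℤ) - 2 by ring,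
    show (((sub t (cls p' b)).card : ℤ) + 1 - 3) = ((sub t (cls p' b)).card : ℤ) - 2 by ring]
  field_simp

end

end
end Hur

namespace Hur
open Finset Equiv Equiv.Perm
open scoped Classical
set_option linter.unusedSectionVars false
set_option linter.unusedVariables false
noncomputable section
variable {α : Type*} [Fintype α] [DecidableEq α]
section
variable {s t p p' : Setoid α} {a b : α}

lemma Spl_le {p1 p2 : Setoid α} (h1 : Spl p1 p a b) (h2 : Spl p2 p a b)
    (h : cls p1 a = cls p2 a) : p1 ≤ p2 := by
  intro x y hxy
  by_cases hx : p a x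
  · by_cases hx1 : x ∈ cls p1 a
    · have hy1 : y ∈ cls p1 a := mem_cls.2 (p1.trans' (mem_cls.1 hx1) hxy)
      rw [h, mem_cls] at hx1 hy1
      exact p2.trans' (p2.symm' hx1) hy1
    · have hy1 : y ∉ cls p1 a := fun hy =>
        hx1 (mem_cls.2 (p1.trans' (mem_cls.1 hy) (p1.symm' hxy)))
      have hy : p a y := p.trans' hx (h1.le hxy)
      rw [h] at hx1 hy1
      rw [← mem_cls, h2.cls_a, mem_union] at hx hy
      have hx2 := mem_cls.1 (hx.resolve_left hx1)
      have hy2 := mem_cls.1 (hy.resolve_left hy1)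
      exact p2.trans' (p2.symm' hx2) hy2
  · have e1 := h1.cls_other hx
    have e2 := h2.cls_other hx
    have : y ∈ cls p1 x := mem_cls.2 hxy
    rw [← e1, e2] at this
    exact mem_cls.1 this

lemma Inv.biUnion {U : Finset α} (h : Inv s U) : U = (sub s U).biUnion id := by
  ext x
  rw [mem_biUnion]
  constructor
  · intro hx
    exact ⟨_, inv_sub h hx, self_mem_cls s x⟩
  · rintro ⟨γ, hγ, hx⟩
    exact (mem_sub.1 hγ).2 hx

/-- split off `U` -/
def splitU (p : Setoid α) (U : Finset α) : Setoid α where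
  r x y := p x y ∧ (x ∈ U ↔ y ∈ U)
  iseqv := ⟨fun x => ⟨p.refl' x, Iff.rfl⟩, fun h => ⟨p.symm' h.1, h.2.symm⟩,
    fun h h' => ⟨p.trans' h.1 h'.1, h.2.trans h'.2⟩⟩

lemma splitU_iff {U : Finset α} {x y : α} : splitU p U x y ↔ p x y ∧ (x ∈ U ↔ y ∈ U) := Iff.rfl

lemma splitU_spl {U : Finset α} (hab : p a b) (hU : U ⊆ cls p a) (ha : a ∈ U) (hb : b ∉ U) :
    Spl (splitU p U) p a b := by
  refine ⟨fun h => hb ((splitU_iff.1 h).2.1 ha), le_antisymm (sup_le ?_ (swap_le_iff.2 hab)) ?_⟩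
  · intro x y h; exact h.1
  · have key : ∀ x y, p x y → x ∈ U → y ∉ U → (splitU p U ⊔ cyc (swap a b)) x y := by
      intro x y hxy hx hy
      have hax := mem_cls.1 (hU hx)
      have l1 : splitU p U ≤ splitU p U ⊔ cyc (swap a b) := le_sup_left
      have l2 : cyc (swap a b) ≤ splitU p U ⊔ cyc (swap a b) := le_sup_right
      have h1 : (splitU p U ⊔ cyc (swap a b)) x a :=
        l1 (splitU_iff.2 ⟨p.symm' hax, by simp [hx, ha]⟩)
      have h2 : (splitU p U ⊔ cyc (swap a b)) a b := swap_le_iff.1 l2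
      have h3 : (splitU p U ⊔ cyc (swap a b)) b y :=
        l1 (splitU_iff.2 ⟨p.trans' (p.symm' hab) (p.trans' hax hxy), by simp [hy, hb]⟩)
      exact Setoid.trans' _ h1 (Setoid.trans' _ h2 h3)
    intro x y hxy
    by_cases hx : x ∈ U <;> by_cases hy : y ∈ U
    · exact (le_sup_left : splitU p U ≤ splitU p U ⊔ cyc (swap a b)) (splitU_iff.2 ⟨hxy, by simp [hx, hy]⟩)
    · exact key x y hxy hx hy
    · exact Setoid.symm' _ (key y x (p.symm' hxy) hy hx)
    · exact (le_sup_left : splitU p U ≤ splitU p U ⊔ cyc (swap a b)) (splitU_iff.2 ⟨hxy, by simp [hx, hy]⟩)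

lemma splitU_cls {U : Finset α} (hU : U ⊆ cls p a) (ha : a ∈ U) : cls (splitU p U) a = U := by
  ext y
  rw [mem_cls, splitU_iff]
  constructor
  · intro h; exact h.2.1 ha
  · intro h; exact ⟨mem_cls.1 (hU h), by simp [ha, h]⟩

lemma cut_bij (h : Spl s t a b) (ht : t ≤ p) (G : Finset (Finset α) → ℚ) :
    ∑ p' ∈ univ.filter (fun p' => Spl p' p a b ∧ s ≤ p'), G (sub t (cls p' a)) =
      ∑ S ∈ ((sub t (cls p a)).erase (cls t a)).powerset, G S := by
  refine sum_bij (fun p' _ => sub t (cls p' a)) ?_ ?_ ?_ (fun _ _ => rfl)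
  · intro p' hp'
    rw [mem_filter] at hp'
    obtain ⟨-, h', hs⟩ := hp'
    rw [mem_powerset]
    intro γ hγ
    rw [mem_sub] at hγ
    rw [mem_erase, mem_sub]
    refine ⟨?_, hγ.1, hγ.2.trans ?_⟩
    · rintro rfl
      exact h'.1 (mem_cls.1 (hγ.2 h.mem_ta))
    · rw [h'.cls_a]; exact subset_union_left
  · intro p1 hp1 p2 hp2 e
    simp only [mem_filter, mem_univ, true_and] at hp1 hp2
    obtain ⟨h1, hs1⟩ := hp1
    obtain ⟨h2, hs2⟩ := hp2
    have i1 := inv_of_le hs1 (cls_mem_PP p1 a)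
    have i2 := inv_of_le hs2 (cls_mem_PP p2 a)
    have ec : cls p1 a = cls p2 a := by
      rw [i1.biUnion, i2.biUnion, h.sub_U i1 (self_mem_cls _ _) (fun hb => h1.1 (mem_cls.1 hb)),
        h.sub_U i2 (self_mem_cls _ _) (fun hb => h2.1 (mem_cls.1 hb))]
      rw [e]
    exact le_antisymm (Spl_le h1 h2 ec) (Spl_le h2 h1 ec.symm)
  · intro S hS
    rw [mem_powerset] at hS
    set U : Finset α := cls s a ∪ S.biUnion id with hUdef
    have memU : ∀ x, x ∈ U ↔ s a x ∨ ∃ γ ∈ S, x ∈ γ := by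
      intro x; rw [hUdef, mem_union, mem_cls, mem_biUnion]; rfl
    have hS1 : ∀ γ ∈ S, γ ≠ cls t a ∧ γ ∈ PP t ∧ γ ⊆ cls p a := by
      intro γ hγ
      have := hS hγ
      rwa [mem_erase, mem_sub] at this
    have ha : a ∈ U := (memU a).2 (Or.inl (s.refl' a))
    have hb : b ∉ U := by
      rw [memU]
      rintro (hb | ⟨γ, hγ, hb⟩)
      · exact h.1 hb
      · exact (hS1 γ hγ).1 ((PP_eq_cls (hS1 γ hγ).2.1 hb).trans (cls_b h))
    have hUp : U ⊆ cls p a := by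
      intro x hx
      rcases (memU x).1 hx with hx | ⟨γ, hγ, hx⟩
      · exact mem_cls.2 (ht (h.le hx))
      · exact (hS1 γ hγ).2.2 hx
    have hinv : Inv s U := by
      intro x hx y hxy
      rw [memU] at hx ⊢
      rcases hx with hx | ⟨γ, hγ, hx⟩
      · exact Or.inl (s.trans' hx hxy)
      · refine Or.inr ⟨γ, hγ, ?_⟩
        rw [PP_eq_cls (hS1 γ hγ).2.1 hx, mem_cls]
        exact h.le hxy
    refine ⟨splitU p U, ?_, ?_⟩
    · rw [mem_filter]
      refine ⟨mem_univ _, splitU_spl (ht h.rel) hUp ha hb, ?_⟩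
      intro x y hxy
      exact ⟨ht (h.le hxy), fun hx => hinv x hx y hxy, fun hy => hinv y hy x (s.symm' hxy)⟩
    · rw [splitU_cls hUp ha]
      ext γ
      rw [mem_sub]
      constructor
      · rintro ⟨h1, h2⟩
        obtain ⟨x, hx⟩ := PP_nonempty h1
        rcases (memU x).1 (h2 hx) with hx' | ⟨γ', hγ', hx'⟩
        · exfalso
          have : γ = cls t a := (PP_eq_cls h1 hx).trans (cls_eq_iff.2 (t.symm' (h.le hx')))
          subst this
          exact hb (h2 h.mem_ta)
        · rw [PP_eq_cls h1 hx, ← PP_eq_cls (hS1 γ' hγ').2.1 hx']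
          exact hγ'
      · intro hγ
        exact ⟨(hS1 γ hγ).2.1, fun x hx => (memU x).2 (Or.inr ⟨γ, hγ, hx⟩)⟩

end

/-- weighted count of factorisations -/
def W : ℕ → Perm α → Setoid α → ℚ
  | 0, σ, π => if σ = 1 ∧ π = ⊥ then 1 else 0
  | r + 1, σ, π => ∑ τ ∈ univ.filter (fun τ : Perm α => τ.IsSwap),
      ∑ π' ∈ univ.filter (fun π' : Setoid α => π' ⊔ cyc τ = π), W r (τ * σ) π'

lemma cyc_one : cyc (1 : Perm α) = ⊥ := by
  rw [_root_.eq_bot_iff, cyc_le_iff]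
  intro x; exact Setoid.refl' _ x

lemma swap_mul_swap_mul (a b : α) (σ : Perm α) : swap a b * (swap a b * σ) = σ := by
  rw [← mul_assoc, swap_mul_self, one_mul]

lemma card_step (σ : Perm α) {a b : α} (hab : a ≠ b) :
    (PP (cyc σ)).card ≤ (PP (cyc (swap a b * σ))).card + 1 := by
  by_cases h : cyc σ a b
  · have := (cut_spl σ hab h).card; omega
  · have := (join_spl σ a b h).card; omega

lemma W_vanish (r : ℕ) : ∀ (σ : Perm α) (π : Setoid α), W r σ π ≠ 0 →
    cyc σ ≤ π ∧ Fintype.card α + (PP (cyc σ)).card ≤ r + 2 * (PP π).card := by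
  induction r with
  | zero =>
    intro σ π h
    rw [W] at h
    split_ifs at h with h1
    · obtain ⟨rfl, rfl⟩ := h1
      rw [cyc_one, PP_bot_card]
      exact ⟨le_rfl, by omega⟩
    · exact absurd rfl h
  | succ r ih =>
    intro σ π h
    rw [W] at h
    obtain ⟨τ, hτ, h⟩ := exists_ne_zero_of_sum_ne_zero h
    obtain ⟨π', hπ', h⟩ := exists_ne_zero_of_sum_ne_zero h
    rw [mem_filter] at hτ hπ'
    obtain ⟨a, b, hab, rfl⟩ := hτ.2
    obtain ⟨h1, h2⟩ := ih _ _ h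
    have hle : cyc σ ≤ π := by
      rw [← hπ'.2]
      calc cyc σ ≤ cyc σ ⊔ cyc (swap a b) := le_sup_left
        _ = cyc (swap a b * σ) ⊔ cyc (swap a b) := (cyc_sup σ a b).symm
        _ ≤ _ := sup_le_sup_right h1 _
    refine ⟨hle, ?_⟩
    by_cases hp : π' a b
    · have : π' = π := by rw [← hπ'.2]; exact (sup_eq_left.2 (swap_le_iff.2 hp)).symm
      subst this
      have := card_step σ hab
      omega
    · have c0 : Spl π' π a b := ⟨hp, hπ'.2⟩
      have c1 := c0.card
      have c2 := (join_spl (swap a b * σ) a b (fun hh => hp (h1 hh))).card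
      rw [swap_mul_swap_mul] at c2
      omega

lemma sum_swaps (F : Perm α → ℚ) :
    ∑ τ ∈ univ.filter (fun τ : Perm α => τ.IsSwap), F τ =
      (1 / 2) * ∑ a, ∑ b ∈ univ.erase a, F (swap a b) := by
  have e : ∑ a, ∑ b ∈ univ.erase a, F (swap a b) =
      ∑ q ∈ univ.filter (fun q : α × α => q.1 ≠ q.2), F (swap q.1 q.2) := by
    rw [sum_filter, Fintype.sum_prod_type]
    refine sum_congr rfl fun a _ => ?_
    rw [← sum_filter]
    refine sum_congr ?_ fun _ _ => rfl
    ext b; simp [eq_comm]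
  rw [e, ← sum_fiberwise_of_maps_to (s := univ.filter (fun q : α × α => q.1 ≠ q.2))
    (t := univ.filter (fun τ : Perm α => τ.IsSwap)) (g := fun q => swap q.1 q.2), mul_sum]
  · refine sum_congr rfl fun τ hτ => ?_
    rw [mem_filter] at hτ
    obtain ⟨c, d, hcd, rfl⟩ := hτ.2
    have : (univ.filter (fun q : α × α => q.1 ≠ q.2)).filter (fun q => swap q.1 q.2 = swap c d) =
        {(c, d), (d, c)} := by
      ext ⟨a, b⟩
      simp only [mem_filter, mem_univ, true_and, mem_insert, mem_singleton, Prod.mk.injEq]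
      constructor
      · rintro ⟨h1, h2⟩
        have h3 : swap c d a = b := by rw [← h2]; simp
        rcases eq_or_ne a c with rfl | hac
        · left; simpa using h3.symm
        rcases eq_or_ne a d with rfl | had
        · right; simpa using h3.symm
        · rw [swap_apply_of_ne_of_ne hac had] at h3
          exact absurd h3 h1
      · rintro (⟨rfl, rfl⟩ | ⟨rfl, rfl⟩)
        · exact ⟨hcd, rfl⟩
        · exact ⟨hcd.symm, swap_comm _ _⟩
    rw [this, sum_pair (by simp [hcd])]
    dsimp only
    rw [swap_comm d c]; ring
  · intro q hq
    rw [mem_filter] at hq ⊢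
    exact ⟨mem_univ _, q.1, q.2, hq.2, rfl⟩

/-- contribution of a single ordered pair -/
def Tt (r : ℕ) (σ : Perm α) (π : Setoid α) (a b : α) : ℚ :=
  ∑ π' ∈ univ.filter (fun π' : Setoid α => π' ⊔ cyc (swap a b) = π), W r (swap a b * σ) π'

lemma W_succ (r : ℕ) (σ : Perm α) (π : Setoid α) :
    W (r + 1) σ π = (1 / 2) * ∑ a, ∑ b ∈ univ.erase a, Tt r σ π a b := by
  rw [W, sum_swaps]; rfl

lemma Tt_zero (r : ℕ) (σ : Perm α) (π : Setoid α) {a b : α} (h : ¬ π a b) : Tt r σ π a b = 0 := by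
  rw [Tt, filter_false_of_mem, sum_empty]
  intro π' _ e
  exact h (swap_le_iff.1 (e ▸ le_sup_right))

section
variable {r : ℕ} {σ : Perm α} {π : Setoid α}

lemma Tt_join (ih : ∀ (σ : Perm α) (π : Setoid α), cyc σ ≤ π →
      Fintype.card α + (PP (cyc σ)).card = r + 2 * (PP π).card → W r σ π = r.factorial * Wt (cyc σ) π)
    (hle : cyc σ ≤ π) (hdim : Fintype.card α + (PP (cyc σ)).card = r + 1 + 2 * (PP π).card)
    {a b : α} (h1 : π a b) (h2 : ¬ cyc σ a b) :
    Tt r σ π a b = r.factorial * Wt (cyc σ) π *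
      (gg ((cls (cyc σ) a).card + (cls (cyc σ) b).card) /
      (gg (cls (cyc σ) a).card * gg (cls (cyc σ) b).card) / (cls π a).card) := by
  have hS := join_spl σ a b h2
  have hle' : cyc (swap a b * σ) ≤ π :=
    (cyc_mul_le σ a b).trans (sup_le hle (swap_le_iff.2 h1))
  rw [Tt, sum_eq_single π]
  · rw [ih _ _ hle' (by have := hS.card; omega), Wt_join hS hle']
    ring
  · intro π' hπ' hne
    by_contra hW
    rw [mem_filter] at hπ'
    have := (W_vanish r _ _ hW).1 hS.rel
    exact hne (by rw [← hπ'.2]; exact (sup_eq_left.2 (swap_le_iff.2 this)).symm)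
  · intro hn
    refine absurd ?_ hn
    rw [mem_filter]
    exact ⟨mem_univ _, sup_eq_left.2 (swap_le_iff.2 h1)⟩

lemma Tt_cut (ih : ∀ (σ : Perm α) (π : Setoid α), cyc σ ≤ π →
      Fintype.card α + (PP (cyc σ)).card = r + 2 * (PP π).card → W r σ π = r.factorial * Wt (cyc σ) π)
    (hle : cyc σ ≤ π) (hdim : Fintype.card α + (PP (cyc σ)).card = r + 1 + 2 * (PP π).card)
    {a b : α} (hab : a ≠ b) (h2 : cyc σ a b) :
    Tt r σ π a b = r.factorial * Wt (cyc σ) π *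
      (gg (cls (cyc (swap a b * σ)) a).card *
        gg ((cls (cyc σ) a).card - (cls (cyc (swap a b * σ)) a).card) / gg (cls (cyc σ) a).card *
        XX Finset.card ((sub (cyc σ) (cls π a)).erase (cls (cyc σ) a))
          (cls (cyc (swap a b * σ)) a).card
          ((cls (cyc σ) a).card - (cls (cyc (swap a b * σ)) a).card) /
        ((cls π a).card : ℚ) ^ (((sub (cyc σ) (cls π a)).card : ℤ) - 3)) := by
  have hS := cut_spl σ hab h2
  have hc := hS.card
  have e0 : Tt r σ π a b = ∑ π' ∈ univ.filter
      (fun π' : Setoid α => Spl π' π a b ∧ cyc (swap a b * σ) ≤ π'), W r (swap a b * σ) π' := by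
    rw [Tt]
    symm
    apply sum_subset
    · intro π' h
      rw [mem_filter] at h ⊢
      exact ⟨mem_univ _, h.2.1.2⟩
    · intro π' h hn
      rw [mem_filter] at h hn
      by_contra hW
      obtain ⟨v1, v2⟩ := W_vanish r _ _ hW
      apply hn
      refine ⟨mem_univ _, ⟨fun hp => ?_, h.2⟩, v1⟩
      have : π' = π := by rw [← h.2]; exact (sup_eq_left.2 (swap_le_iff.2 hp)).symm
      subst this
      omega
  have hL : (cls (cyc σ) a).card - (cls (cyc (swap a b * σ)) a).card =
      (cls (cyc (swap a b * σ)) b).card := by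
    rw [hS.card_t]; omega
  rw [e0, hL]
  set G : Finset (Finset α) → ℚ := (fun S => r.factorial * Wt (cyc σ) π * (gg (cls (cyc (swap a b * σ)) a).card *
        gg (cls (cyc (swap a b * σ)) b).card / gg (cls (cyc σ) a).card *
        XS ((sub (cyc σ) (cls π a)).erase (cls (cyc σ) a)) S
          (cls (cyc (swap a b * σ)) a).card (cls (cyc (swap a b * σ)) b).card /
        ((cls π a).card : ℚ) ^ ((mm (cyc σ) (cls π a) : ℤ) - 3))) with hG
  have e1 : ∀ π' ∈ univ.filter
      (fun π' : Setoid α => Spl π' π a b ∧ cyc (swap a b * σ) ≤ π'), W r (swap a b * σ) π' =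
      G (sub (cyc σ) (cls π' a)) := by
    intro π' h
    rw [mem_filter] at h
    obtain ⟨-, h', hs⟩ := h
    rw [ih _ _ hs (by have := h'.card; omega), Wt_cut hS h' hs hle h2, hG]
    ring
  rw [sum_congr rfl e1, cut_bij hS hle G, hG, ← mul_sum, ← sum_div, ← mul_sum]
  rfl

end

end
end Hur

namespace Hur
open Finset Equiv Equiv.Perm
open scoped Classical
set_option linter.unusedSectionVars false
set_option linter.unusedVariables false
noncomputable section

lemma local_identity' {ι : Type*} [DecidableEq ι] (a : ι → ℕ) (C : Finset ι) (ha : ∀ i ∈ C, 0 < a i)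
    (hC : C.Nonempty) (n : ℚ) (hn : n = ∑ i ∈ C, (a i : ℚ)) :
    (∑ i ∈ C, (a i:ℚ) * ((∑ j ∈ C.erase i, (a j:ℚ) * (gg (a i + a j)/(gg (a i)*gg (a j))/n)) +
      (∑ d ∈ Ico 1 (a i), gg d * gg (a i - d)/gg (a i) * XX a (C.erase i) d (a i - d)) /
        n^((C.card:ℤ)-3))) = 2*(n + C.card - 2) := by
  set a' : ι → ℕ := fun i => if i ∈ C then a i else 1 with ha'
  have e : ∀ i ∈ C, a' i = a i := fun i hi => if_pos hi
  have h := local_identity a' (fun i => by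
    by_cases hi : i ∈ C
    · rw [e i hi]; exact ha i hi
    · simp [ha', hi]) C hC n (by
      rw [hn]; exact sum_congr rfl fun i hi => by rw [e i hi])
  rw [← h]
  refine sum_congr rfl fun i hi => ?_
  rw [e i hi]
  congr 2
  · refine sum_congr rfl fun j hj => ?_
    rw [e j (mem_of_mem_erase hj)]
  · congr 1
    refine sum_congr rfl fun d _ => ?_
    congr 1
    unfold XX
    refine sum_congr rfl fun S hS => ?_
    rw [mem_powerset] at hS
    have e1 : ∑ i ∈ S, (a' i : ℚ) = ∑ i ∈ S, (a i : ℚ) :=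
      sum_congr rfl fun j hj => by rw [e j (mem_of_mem_erase (hS hj))]
    have e2 : ∑ j ∈ C.erase i \ S, (a' j : ℚ) = ∑ j ∈ C.erase i \ S, (a j : ℚ) :=
      sum_congr rfl fun j hj => by rw [e j (mem_of_mem_erase (mem_sdiff.1 hj).1)]
    rw [e1, e2]

variable {α : Type*} [Fintype α] [DecidableEq α]

/-- total contribution of a point in cycle `i` and block `B` -/
def Phi (ρ : Setoid α) (B i : Finset α) : ℚ :=
  (∑ j ∈ (sub ρ B).erase i, (j.card:ℚ) * (gg (i.card + j.card)/(gg i.card * gg j.card)/B.card)) +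
      (∑ d ∈ Ico 1 i.card, gg d * gg (i.card - d)/gg i.card *
        XX Finset.card ((sub ρ B).erase i) d (i.card - d)) / (B.card:ℚ)^(((sub ρ B).card:ℤ)-3)

lemma sum_Phi {ρ π : Setoid α} (h : ρ ≤ π) :
    ∑ a, Phi ρ (cls π a) (cls ρ a) =
      2 * ((Fintype.card α : ℚ) + (PP ρ).card - 2 * (PP π).card) := by
  have e1 : ∑ a, Phi ρ (cls π a) (cls ρ a) = ∑ B ∈ PP π, ∑ a ∈ B, Phi ρ B (cls ρ a) := by
    rw [← sum_fiberwise_of_maps_to (g := cls π) (t := PP π) (fun x _ => cls_mem_PP π x)]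
    refine sum_congr rfl fun B hB => ?_
    have e : univ.filter (fun x => cls π x = B) = B := by
      ext x
      rw [mem_filter]
      constructor
      · rintro ⟨_, rfl⟩; exact self_mem_cls π x
      · intro hx; exact ⟨mem_univ _, (PP_eq_cls hB hx).symm⟩
    rw [e]
    refine sum_congr rfl fun x hx => ?_
    rw [← PP_eq_cls hB hx]
  have e2 : ∀ B ∈ PP π, ∑ a ∈ B, Phi ρ B (cls ρ a) = 2 * ((B.card : ℚ) + (sub ρ B).card - 2) := by
    intro B hB
    have hi := inv_of_le h hB
    rw [sum_inv ρ hi (Phi ρ B)]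
    obtain ⟨x, hx⟩ := PP_nonempty hB
    exact local_identity' Finset.card (sub ρ B) (fun i hi => PP_card_pos (mem_sub.1 hi).1)
      ⟨_, inv_sub hi hx⟩ _ (card_inv ρ hi)
  rw [e1, sum_congr rfl e2, ← mul_sum, sum_sub_distrib, sum_add_distrib]
  have e3 := sum_all π (fun _ => 1)
  have e4 := sum_sub_univ h (fun _ => 1)
  simp only [sum_const, card_univ, nsmul_eq_mul, mul_one] at e3 e4 ⊢
  rw [← e3, e4]
  ring

section
variable {r : ℕ} {σ : Perm α} {π : Setoid α}

lemma sum_b (ih : ∀ (σ : Perm α) (π : Setoid α), cyc σ ≤ π →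
      Fintype.card α + (PP (cyc σ)).card = r + 2 * (PP π).card → W r σ π = r.factorial * Wt (cyc σ) π)
    (hle : cyc σ ≤ π) (hdim : Fintype.card α + (PP (cyc σ)).card = r + 1 + 2 * (PP π).card)
    (a : α) :
    ∑ b ∈ univ.erase a, Tt r σ π a b =
      r.factorial * Wt (cyc σ) π * Phi (cyc σ) (cls π a) (cls (cyc σ) a) := by
  have hsub : cls (cyc σ) a ⊆ cls π a := fun x hx => mem_cls.2 (hle (mem_cls.1 hx))
  have s1 : ∑ b ∈ univ.erase a, Tt r σ π a b = ∑ b ∈ (cls π a).erase a, Tt r σ π a b := by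
    symm
    apply sum_subset (erase_subset_erase _ (subset_univ _))
    intro b hb hn
    apply Tt_zero
    intro hab
    exact hn (mem_erase.2 ⟨(mem_erase.1 hb).1, mem_cls.2 hab⟩)
  have s2 : (cls π a).erase a \ (cls (cyc σ) a).erase a = cls π a \ cls (cyc σ) a := by
    ext x
    simp only [mem_sdiff, mem_erase]
    constructor
    · rintro ⟨⟨h1, h2⟩, h3⟩
      exact ⟨h2, fun h => h3 ⟨h1, h⟩⟩
    · rintro ⟨h1, h2⟩
      refine ⟨⟨?_, h1⟩, fun h => h2 h.2⟩
      rintro rfl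
      exact h2 (self_mem_cls _ _)
  rw [s1, ← sum_sdiff (erase_subset_erase a hsub), s2, Phi, mul_add]
  congr 1
  · set G : Finset α → ℚ := fun j : Finset α =>
        r.factorial * Wt (cyc σ) π * (gg ((cls (cyc σ) a).card + j.card) /
      (gg (cls (cyc σ) a).card * gg j.card) / (cls π a).card) with hG
    have e1 : ∀ b ∈ cls π a \ cls (cyc σ) a, Tt r σ π a b = G (cls (cyc σ) b) := by
      intro b hb
      rw [mem_sdiff, mem_cls, mem_cls] at hb
      exact Tt_join ih hle hdim hb.1 hb.2
    have hinv : Inv (cyc σ) (cls π a \ cls (cyc σ) a) := by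
      intro x hx y hxy
      rw [mem_sdiff, mem_cls, mem_cls] at hx ⊢
      exact ⟨π.trans' hx.1 (hle hxy), fun h => hx.2 ((cyc σ).trans' h ((cyc σ).symm' hxy))⟩
    have hsub2 : sub (cyc σ) (cls π a \ cls (cyc σ) a) = (sub (cyc σ) (cls π a)).erase (cls (cyc σ) a) := by
      ext γ
      rw [mem_erase, mem_sub, mem_sub]
      constructor
      · rintro ⟨h1, h2⟩
        refine ⟨?_, h1, h2.trans sdiff_subset⟩
        rintro rfl
        exact (mem_sdiff.1 (h2 (self_mem_cls _ a))).2 (self_mem_cls _ a)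
      · rintro ⟨h1, h2, h3⟩
        refine ⟨h2, fun x hx => mem_sdiff.2 ⟨h3 hx, ?_⟩⟩
        exact Finset.disjoint_left.1 (PP_disj h2 (cls_mem_PP _ a) h1) hx
    rw [sum_congr rfl e1, sum_inv (cyc σ) hinv G, hsub2, mul_sum, hG]
    refine sum_congr rfl fun j _ => ?_
    ring
  · rw [sum_div, ← cut_sum_d σ a (fun d => gg d * gg ((cls (cyc σ) a).card - d)/gg (cls (cyc σ) a).card *
        XX Finset.card ((sub (cyc σ) (cls π a)).erase (cls (cyc σ) a)) d ((cls (cyc σ) a).card - d) /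
        ((cls π a).card:ℚ)^(((sub (cyc σ) (cls π a)).card:ℤ)-3)), mul_sum]
    refine sum_congr rfl fun b hb => ?_
    rw [mem_erase, mem_cls] at hb
    exact Tt_cut ih hle hdim hb.1.symm hb.2

end

theorem W_main (r : ℕ) : ∀ (σ : Perm α) (π : Setoid α), cyc σ ≤ π →
    Fintype.card α + (PP (cyc σ)).card = r + 2 * (PP π).card →
    W r σ π = r.factorial * Wt (cyc σ) π := by
  induction r with
  | zero =>
    intro σ π hle hdim
    have h1 := PP_card_le hle
    have h2 := (PP_card_bot_iff (s := cyc σ))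
    have h3 := (PP_card_bot_iff (s := π))
    have hπ : π = ⊥ := h3.2 (by omega)
    have hσ : cyc σ = ⊥ := h2.2 (by omega)
    have hσ1 : σ = 1 := by
      ext x
      have := (cyc_le_iff (τ := σ) (r := ⊥)).1 hσ.le x
      rw [Setoid.bot_def] at this
      simpa using this.symm
    subst hσ1 hπ
    rw [W, if_pos ⟨rfl, rfl⟩, cyc_one, Wt]
    have c1 : ∀ B ∈ PP (⊥ : Setoid α), B.card = 1 := by
      intro B hB
      obtain ⟨x, rfl⟩ := mem_PP.1 hB
      rw [cls_bot, card_singleton]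
    rw [prod_eq_one, prod_eq_one]
    · simp
    · intro B hB; rw [c1 B hB]; simp [gg, cc]
    · intro B hB; rw [c1 B hB]; simp
  | succ r ih =>
    intro σ π hle hdim
    rw [W_succ, sum_congr rfl (fun a _ => sum_b ih hle hdim a), ← mul_sum, sum_Phi hle]
    have : (Fintype.card α : ℚ) + (PP (cyc σ)).card = r + 1 + 2 * (PP π).card := by
      exact_mod_cast hdim
    rw [this, Nat.factorial_succ]
    push_cast
    ring

lemma iSup_cons (r : ℕ) (t : Perm α) (τ : Fin r → Perm α) :
    (⨆ i, cyc ((Fin.cons t τ : Fin (r + 1) → Perm α) i)) = (⨆ i, cyc (τ i)) ⊔ cyc t := by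
  apply eq_of_forall_ge_iff
  intro c
  rw [iSup_le_iff, Fin.forall_fin_succ, sup_le_iff, iSup_le_iff]
  simp [and_comm]

lemma count (r : ℕ) : ∀ (σ : Perm α) (π : Setoid α),
    (∑ τ : Fin r → Perm α, if ((∀ i, (τ i).IsSwap) ∧ (List.ofFn τ).prod = σ ∧
      (⨆ i, cyc (τ i)) = π) then (1:ℚ) else 0) = W r σ π := by
  induction r with
  | zero =>
    intro σ π
    rw [W, Fintype.sum_unique]
    have e : ∀ f : Fin 0 → Setoid α, (⨆ i, f i) = ⊥ := fun f => iSup_of_empty _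
    simp only [e]
    simp [eq_comm]
  | succ r ih =>
    intro σ π
    rw [W, ← (Fin.consEquiv (fun _ : Fin (r + 1) => Perm α)).sum_comp, Fintype.sum_prod_type, sum_filter]
    refine sum_congr rfl fun t _ => ?_
    split_ifs with ht
    · simp_rw [← ih]
      rw [sum_comm]
      refine sum_congr rfl fun τ _ => ?_
      have inv : t * t = 1 := by
        obtain ⟨a, b, _, rfl⟩ := ht
        exact swap_mul_self a b
      have hp : (t * (List.ofFn τ).prod = σ) ↔ (List.ofFn τ).prod = t * σ := by
        constructor
        · rintro rfl; rw [← mul_assoc, inv, one_mul]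
        · intro h; rw [h, ← mul_assoc, inv, one_mul]
      have e : (Fin.consEquiv (fun _ : Fin (r + 1) => Perm α)) (t, τ) = Fin.cons t τ := rfl
      rw [e, iSup_cons, List.ofFn_succ]
      simp only [Fin.forall_fin_succ, Fin.cons_zero, Fin.cons_succ, List.prod_cons, hp]
      by_cases h1 : (∀ i, (τ i).IsSwap) ∧ (List.ofFn τ).prod = t * σ
      · simp only [h1.2, ht, true_and]
        have h2 := h1.1
        simp only [h2, implies_true, true_and]
        rw [sum_filter, sum_eq_single (⨆ i, cyc (τ i))]
        · simp
        · intro b _ hb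
          simp [Ne.symm hb]
        · simp
      · rw [if_neg (fun h => h1 ⟨h.1.2, h.2.1⟩)]
        symm
        apply sum_eq_zero
        intro π' _
        rw [if_neg (fun h => h1 ⟨h.1, h.2.1⟩)]
    · apply sum_eq_zero
      intro τ _
      rw [if_neg]
      intro h
      exact ht (by simpa using h.1 0)

lemma trans_iff {r : ℕ} (τ : Fin r → Perm α) :
    (∀ x y, ∃ g ∈ Subgroup.closure (Set.range τ), g x = y) ↔ (⨆ i, cyc (τ i)) = ⊤ := by
  constructor
  · intro h
    rw [_root_.eq_top_iff]
    intro x y _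
    obtain ⟨g, hg, rfl⟩ := h x y
    clear h
    induction hg using Subgroup.closure_induction generalizing x with
    | mem g hg =>
      obtain ⟨i, rfl⟩ := hg
      exact (cyc_le_iff.1 (le_iSup (fun i => cyc (τ i)) i)) x
    | one => exact Setoid.refl' _ x
    | mul g h _ _ h1 h2 => exact Setoid.trans' _ (h2 (x := x) trivial) (h1 (x := h x) trivial)
    | inv g _ h1 =>
      have := h1 (x := g⁻¹ x) trivial
      have e : g (g⁻¹ x) = x := by simp
      rw [e] at this
      exact Setoid.symm' _ this
  · intro h x y
    let s : Setoid α :=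
      { r := fun x y => ∃ g ∈ Subgroup.closure (Set.range τ), g x = y
        iseqv := ⟨fun x => ⟨1, one_mem _, rfl⟩,
          fun {x y} ⟨g, hg, e⟩ => ⟨g⁻¹, inv_mem hg, by rw [← e]; simp⟩,
          fun {x y z} ⟨g, hg, e⟩ ⟨g', hg', e'⟩ => ⟨g' * g, mul_mem hg' hg, by
            rw [Perm.mul_apply, e, e']⟩⟩ }
    have hs : (⨆ i, cyc (τ i)) ≤ s := by
      refine iSup_le fun i => cyc_le_iff.2 fun x => ?_
      exact ⟨τ i, Subgroup.subset_closure ⟨i, rfl⟩, rfl⟩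
    rw [h] at hs
    exact hs (show (⊤ : Setoid α) x y from trivial)

lemma final (n : ℕ) (hn : 3 ≤ n) :
    (Nat.card {τ : Fin (2 * n - 2) → Equiv.Perm (Fin n) //
        (∀ i, (τ i).IsSwap) ∧ (List.ofFn τ).prod = 1 ∧
        ∀ x y : Fin n, ∃ g ∈ Subgroup.closure (Set.range τ), g x = y} : ℚ) =
      (n : ℚ) ^ (n - 3) * ((2 * n - 2).factorial : ℚ) := by
  have : NeZero n := ⟨by omega⟩
  simp_rw [trans_iff]
  rw [Nat.card_eq_fintype_card, Fintype.card_subtype, Finset.card_filter]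
  push_cast
  have ht : PP (⊤ : Setoid (Fin n)) = {univ} := by
    ext B
    rw [mem_PP, mem_singleton]
    have : ∀ x, cls (⊤ : Setoid (Fin n)) x = univ := by
      intro x; ext y; rw [mem_cls]; simp
    simp [this, eq_comm]
  have hs : (sub (⊥ : Setoid (Fin n)) univ).card = n := by
    have : sub (⊥ : Setoid (Fin n)) univ = PP ⊥ := by ext γ; simp [mem_sub]
    rw [this, PP_bot_card, Fintype.card_fin]
  rw [count, W_main _ _ _ le_top, cyc_one, Wt, ht, prod_singleton, prod_eq_one, mm, hs]
  · rw [card_univ, Fintype.card_fin, show ((n:ℤ) - 3) = ((n - 3 : ℕ) : ℤ) by omega, zpow_natCast]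
    ring
  · intro B hB
    obtain ⟨x, rfl⟩ := mem_PP.1 hB
    rw [cls_bot, card_singleton]; simp [gg, cc]
  · rw [cyc_one, PP_bot_card, ht, card_singleton, Fintype.card_fin]; omega

end
end Hur

open scoped BigOperators

/-- The genus 0 Hurwitz number — the number of equivalence classes of generic
degree `n` meromorphic functions on the Riemann sphere with a fixed generic set of `2n - 2`
critical values — equals `n^{n-3}·(2n-2)!/n!`.  By the classical Hurwitz correspondence this
number is the count of `(2n-2)`-tuples of transpositions in `S_n` with product the identity
generating a transitive subgroup, divided by `n!`. -/
theorem stmt_8 (n : ℕ) (hn : 3 ≤ n) :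
    ((Nat.card {τ : Fin (2 * n - 2) → Equiv.Perm (Fin n) //
        (∀ i, (τ i).IsSwap) ∧ (List.ofFn τ).prod = 1 ∧
        ∀ x y : Fin n, ∃ g ∈ Subgroup.closure (Set.range τ), g x = y} : ℚ)) /
        (n.factorial : ℚ)
      = (n : ℚ) ^ (n - 3) * ((2 * n - 2).factorial : ℚ) / (n.factorial : ℚ) := by
  rw [Hur.final n hn]
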